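/- For every Young diagram Y (encoded by any weakly increasing b : {1,…,n} → {1,…,n} with y ≤ b(y) for all y), the cardinalities of the sets of pattern-avoiding transversals satisfy |S_Y(213)| ≤ |S_Y(123)| and |S_Y(123)| ≤ |S_Y(312)|. -/

import Mathlib

/-!
The boundary of the diagram is read as a word of East steps (a new column) and North steps (the
next row is finished). Between two steps, the live columns are those already opened whose dot lies
in a row not yet finished; they are kept as a list, ordered by the height of their dots. An East
step inserts the new column, which exceeds all others, into the list, and a North step removes the
first entry. Transversals correspond to runs of this machine from the empty list to the empty list
(`card_good`), and avoidance of a pattern becomes a restriction on the insertions: the entries in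
front of the inserted one increase for 213 and decrease for 123, and those behind it increase
for 321 (`SYcard_213`, `SYcard_123`, `cntH_le_SYcard_321`). Only the positions of the breaks of
monotonicity in the list matter, so all three counts are counts of runs `cnt` on Boolean words.

*213 against 123.* The East steps for 213 and 123 lead to the same multiset of states, except that
in at most one pair the state for 123 has fewer breaks. For 213, fewer breaks mean at least as many
runs, and `cntA_le_cntB` follows by induction on the word.

*123 against 321.* After reversing the list for 321, the two machines have the same East steps, and
a North step removes the first entry for 123 and the last one for 321. Ballot words carry states
too (peaks play the role of breaks). Summed over all ballot words of a given content, the East steps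
and both kinds of North steps act like the addition and the removal of a cell for partitions with
at most two rows, so that both counts are compared with the number `walks` of the corresponding
walks on partitions (`sumB_le_walks`, `walks_le_sumH`).

*321 against 312.* A transversal avoiding 321 is determined by its left-to-right maxima
(`eq_of_lrMax_eq`), and among the transversals with given left-to-right maxima the lexicographically
largest one avoids 312 (`exists_312_avoider`), which gives an injection.
-/

open Equiv

/-- `π` is a transversal of the Young diagram with row lengths `b` (zero-indexed:
the row at height `h` has `b h` cells, i.e. column `i` (1-indexed `i+1`) lies in that row
iff `(i:ℕ)+1 ≤ b h`). -/
def IsTransversal {n : ℕ} (b : Fin n → ℕ) (π : Equiv.Perm (Fin n)) : Prop :=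
  ∀ i : Fin n, (i : ℕ) + 1 ≤ b (π i)

/-- The transversal `π` contains the pattern `τ` inside the Young diagram `b`:
there are columns `f 0 < f 1 < …` whose dots are in the relative order prescribed by `τ`
and all rows and columns through these dots intersect inside the diagram. -/
def ContainsIn {n k : ℕ} (b : Fin n → ℕ) (π : Equiv.Perm (Fin n))
    (τ : Equiv.Perm (Fin k)) : Prop :=
  ∃ f : Fin k → Fin n, StrictMono f ∧
    (∀ s t : Fin k, τ s < τ t ↔ π (f s) < π (f t)) ∧
    (∀ s t : Fin k, (f s : ℕ) + 1 ≤ b (π (f t)))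

/-- `|S_Y(τ)|`: the number of transversals of the Young diagram `b` avoiding `τ` in `Y`. -/
noncomputable def SYcard {n k : ℕ} (b : Fin n → ℕ) (τ : Equiv.Perm (Fin k)) : ℕ :=
  Nat.card {π : Equiv.Perm (Fin n) // IsTransversal b π ∧ ¬ ContainsIn b π τ}

/-- Classical pattern containment for permutations. -/
def ContainsPat {n k : ℕ} (π : Equiv.Perm (Fin n)) (τ : Equiv.Perm (Fin k)) : Prop :=
  ∃ f : Fin k → Fin n, StrictMono f ∧ ∀ s t : Fin k, τ s < τ t ↔ π (f s) < π (f t)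

/-- `|S_n(τ)|`: the number of permutations of length `n` avoiding `τ`. -/
noncomputable def SnCard (n : ℕ) {k : ℕ} (τ : Equiv.Perm (Fin k)) : ℕ :=
  Nat.card {π : Equiv.Perm (Fin n) // ¬ ContainsPat π τ}

def p123 : Equiv.Perm (Fin 3) := Equiv.refl _
def p213 : Equiv.Perm (Fin 3) :=
  ⟨![1, 0, 2], ![1, 0, 2], by intro x; fin_cases x <;> rfl, by intro x; fin_cases x <;> rfl⟩
def p312 : Equiv.Perm (Fin 3) :=
  ⟨![2, 0, 1], ![1, 2, 0], by intro x; fin_cases x <;> rfl, by intro x; fin_cases x <;> rfl⟩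
def p321 : Equiv.Perm (Fin 3) :=
  ⟨![2, 1, 0], ![2, 1, 0], by intro x; fin_cases x <;> rfl, by intro x; fin_cases x <;> rfl⟩

/-- `(σ|τ)`: the block sum with the block of `σ` before and entirely above the block of `τ`. -/
def blockSum {m k : ℕ} (σ : Equiv.Perm (Fin m)) (τ : Equiv.Perm (Fin k)) :
    Equiv.Perm (Fin (m + k)) :=
  finSumFinEquiv.symm.trans ((((Equiv.sumCongr σ τ).trans
    (Equiv.sumComm (Fin m) (Fin k))).trans finSumFinEquiv).trans
    (finCongr (Nat.add_comm k m)))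

/-- `|S_{↘Y}(τ)|`: avoiders whose two leftmost entries are decreasing. -/
noncomputable def SYcardLeftDesc {m k : ℕ} (b : Fin m → ℕ) (τ : Equiv.Perm (Fin k)) : ℕ :=
  Nat.card {π : Equiv.Perm (Fin m) // IsTransversal b π ∧ ¬ ContainsIn b π τ ∧
    ∀ i j : Fin m, (i : ℕ) = 0 → (j : ℕ) = 1 → π j < π i}

/-- `|S_{↗Y}(τ)|`: avoiders whose two leftmost entries are increasing. -/
noncomputable def SYcardLeftAsc {m k : ℕ} (b : Fin m → ℕ) (τ : Equiv.Perm (Fin k)) : ℕ :=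
  Nat.card {π : Equiv.Perm (Fin m) // IsTransversal b π ∧ ¬ ContainsIn b π τ ∧
    ∀ i j : Fin m, (i : ℕ) = 0 → (j : ℕ) = 1 → π i < π j}

/-- `|S^{↘}_Y(τ)|`: avoiders in which the value `m` occurs to the left of the value `m-1`. -/
noncomputable def SYcardTopDesc {m k : ℕ} (b : Fin m → ℕ) (τ : Equiv.Perm (Fin k)) : ℕ :=
  Nat.card {π : Equiv.Perm (Fin m) // IsTransversal b π ∧ ¬ ContainsIn b π τ ∧
    ∀ u v : Fin m, (u : ℕ) + 1 = m → (v : ℕ) + 2 = m → π⁻¹ u < π⁻¹ v}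

/-- `|S^{↗}_Y(τ)|`: avoiders in which the value `m-1` occurs to the left of the value `m`. -/
noncomputable def SYcardTopAsc {m k : ℕ} (b : Fin m → ℕ) (τ : Equiv.Perm (Fin k)) : ℕ :=
  Nat.card {π : Equiv.Perm (Fin m) // IsTransversal b π ∧ ¬ ContainsIn b π τ ∧
    ∀ u v : Fin m, (u : ℕ) + 1 = m → (v : ℕ) + 2 = m → π⁻¹ v < π⁻¹ u}

/-! ### Machines reading a boundary word -/

/-- All ways to insert `x` into `t`, at a place reached from the left through a chain of
`r`-related neighbours, where `p` is the entry preceding `t`. -/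
def insAft (r : ℕ → ℕ → Bool) (x : ℕ) : ℕ → List ℕ → List (List ℕ)
  | _, [] => [[x]]
  | p, d :: t => (x :: d :: t) :: (if r p d then (insAft r x d t).map (d :: ·) else [])

/-- All ways to insert `x` into a list so that the entries in front of `x` form an `r`-chain. -/
def insF (r : ℕ → ℕ → Bool) (x : ℕ) : List ℕ → List (List ℕ)
  | [] => [[x]]
  | c :: t => (x :: c :: t) :: (insAft r x c t).map (c :: ·)

/-- All ways to insert `x` into a list so that the entries behind `x`, read from the right,
form an `r`-chain. -/
def insR (r : ℕ → ℕ → Bool) (x : ℕ) (L : List ℕ) : List (List ℕ) :=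
  (insF r x L.reverse).map List.reverse

lemma mem_insAft (r : ℕ → ℕ → Bool) (x : ℕ) (t : List ℕ) : ∀ (p : ℕ) (L' : List ℕ),
    L' ∈ insAft r x p t ↔ ∃ pre post, t = pre ++ post ∧ L' = pre ++ x :: post ∧
      (p :: pre).IsChain (fun a b => r a b = true) := by
  induction t with
  | nil => intro p L'; simp [insAft]
  | cons d t ih =>
    intro p L'
    constructor
    · intro h
      simp only [insAft, List.mem_cons] at h
      rcases h with rfl | h
      · exact ⟨[], d :: t, by simp⟩
      · split_ifs at h with hr
        · simp only [List.mem_map] at h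
          obtain ⟨L₁, h1, rfl⟩ := h
          obtain ⟨pre, post, rfl, rfl, h2⟩ := (ih d L₁).1 h1
          exact ⟨d :: pre, post, rfl, rfl, List.isChain_cons_cons.2 ⟨hr, h2⟩⟩
        · simp at h
    · rintro ⟨pre, post, h1, rfl, h2⟩
      cases pre with
      | nil => simp at h1; subst h1; simp [insAft]
      | cons e pre =>
        simp at h1
        obtain ⟨rfl, rfl⟩ := h1
        rw [List.isChain_cons_cons] at h2
        simp only [insAft, h2.1, if_true, List.mem_cons, List.mem_map]
        exact Or.inr ⟨pre ++ x :: post, (ih d _).2 ⟨pre, post, rfl, rfl, h2.2⟩, rfl⟩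

lemma mem_insF (r : ℕ → ℕ → Bool) (x : ℕ) (L L' : List ℕ) :
    L' ∈ insF r x L ↔ ∃ pre post, L = pre ++ post ∧ L' = pre ++ x :: post ∧
      pre.IsChain (fun a b => r a b = true) := by
  cases L with
  | nil => simp [insF]
  | cons c t =>
    simp only [insF, List.mem_cons, List.mem_map, mem_insAft]
    constructor
    · rintro (rfl | ⟨_, ⟨pre, post, rfl, rfl, h⟩, rfl⟩)
      · exact ⟨[], c :: t, by simp⟩
      · exact ⟨c :: pre, post, rfl, rfl, h⟩
    · rintro ⟨pre, post, h1, rfl, h2⟩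
      cases pre with
      | nil => simp at h1; subst h1; simp
      | cons e pre =>
        simp at h1
        obtain ⟨rfl, rfl⟩ := h1
        exact Or.inr ⟨_, ⟨pre, post, rfl, rfl, h2⟩, rfl⟩

lemma mem_insR (r : ℕ → ℕ → Bool) (x : ℕ) (L L' : List ℕ) :
    L' ∈ insR r x L ↔ ∃ pre post, L = pre ++ post ∧ L' = pre ++ x :: post ∧
      post.reverse.IsChain (fun a b => r a b = true) := by
  simp only [insR, List.mem_map, mem_insF]
  constructor
  · rintro ⟨_, ⟨pre, post, h1, rfl, h2⟩, rfl⟩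
    refine ⟨post.reverse, pre.reverse, ?_, by simp, by simpa using h2⟩
    rw [← List.reverse_append, ← h1, List.reverse_reverse]
  · rintro ⟨pre, post, rfl, rfl, h⟩
    exact ⟨_, ⟨post.reverse, pre.reverse, by simp, rfl, h⟩, by simp⟩

lemma nodup_insAft (r : ℕ → ℕ → Bool) (x : ℕ) (t : List ℕ) : ∀ (p : ℕ), x ∉ t →
    (insAft r x p t).Nodup := by
  induction t with
  | nil => intro p _; simp [insAft]
  | cons d t ih =>
    intro p hx
    simp only [List.mem_cons, not_or] at hx
    simp only [insAft]
    split_ifs with hr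
    · refine List.nodup_cons.2 ⟨?_, (ih d hx.2).map (List.cons_injective)⟩
      simp only [List.mem_map, List.cons.injEq, not_exists, not_and]
      intro a _ h
      exact absurd h.symm hx.1
    · simp

lemma nodup_insF (r : ℕ → ℕ → Bool) (x : ℕ) (L : List ℕ) (hx : x ∉ L) :
    (insF r x L).Nodup := by
  cases L with
  | nil => simp [insF]
  | cons c t =>
    simp only [List.mem_cons, not_or] at hx
    refine List.nodup_cons.2 ⟨?_, (nodup_insAft r x t c hx.2).map (List.cons_injective)⟩
    simp only [List.mem_map, List.cons.injEq, not_exists, not_and]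
    intro a _ h
    exact absurd h.symm hx.1

lemma nodup_insR (r : ℕ → ℕ → Bool) (x : ℕ) (L : List ℕ) (hx : x ∉ L) :
    (insR r x L).Nodup :=
  (nodup_insF r x L.reverse (by simpa using hx)).map List.reverse_injective

/-- An insertion rule only inserts: deleting `x` from any list it offers gives back `L`,
and it offers no list twice. -/
structure IsInsertion (ins : ℕ → List ℕ → List (List ℕ)) : Prop where
  split : ∀ x L L', L' ∈ ins x L → ∃ pre post, L = pre ++ post ∧ L' = pre ++ x :: post
  nodup : ∀ x L, x ∉ L → (ins x L).Nodup

lemma isInsertion_insF (r : ℕ → ℕ → Bool) : IsInsertion (insF r) where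
  split x L L' h := by
    obtain ⟨pre, post, h1, h2, _⟩ := (mem_insF r x L L').1 h
    exact ⟨pre, post, h1, h2⟩
  nodup := nodup_insF r

lemma isInsertion_insR (r : ℕ → ℕ → Bool) : IsInsertion (insR r) where
  split x L L' h := by
    obtain ⟨pre, post, h1, h2, _⟩ := (mem_insR r x L L').1 h
    exact ⟨pre, post, h1, h2⟩
  nodup := nodup_insR r

/-- The machine. It reads a word in the letters `true` (East step: column `x` is inserted into the
list of live columns according to `ins`) and `false` (North step: the first live column is
popped). The value is the list of all sequences of popped columns over the runs that end with
no live column. -/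
def outs (ins : ℕ → List ℕ → List (List ℕ)) : List Bool → ℕ → List ℕ → List (List ℕ)
  | [], _, [] => [[]]
  | [], _, _ :: _ => []
  | true :: w, x, L => (ins x L).flatMap (outs ins w (x + 1))
  | false :: _, _, [] => []
  | false :: w, x, c :: L => (outs ins w x L).map (c :: ·)

/-- The sequences of popped columns produced by the machine, described without running it. -/
def Good (ins : ℕ → List ℕ → List (List ℕ)) : List Bool → ℕ → List ℕ → Prop
  | [], _, l => l = []
  | true :: w, x, l => l.filter (· < x + 1) ∈ ins x (l.filter (· < x)) ∧ Good ins w (x + 1) l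
  | false :: w, x, l => ∃ c l', l = c :: l' ∧ c < x ∧ Good ins w x l'

lemma filter_lt_filter_succ (x : ℕ) (l : List ℕ) :
    (l.filter (· < x + 1)).filter (· < x) = l.filter (· < x) := by
  rw [List.filter_filter]
  congr 1; ext a
  simp; omega

lemma filter_insert {x : ℕ} {pre post : List ℕ} (h : ∀ a ∈ pre ++ post, a < x) :
    (pre ++ x :: post).filter (· < x) = pre ++ post := by
  have h1 : pre.filter (· < x) = pre := by
    rw [List.filter_eq_self]; intro a ha; simpa using h a (by simp [ha])
  have h2 : post.filter (· < x) = post := by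
    rw [List.filter_eq_self]; intro a ha; simpa using h a (by simp [ha])
  simp [List.filter_append, h1, h2]

lemma mem_outs {ins : ℕ → List ℕ → List (List ℕ)} (hi : IsInsertion ins) (w : List Bool) :
    ∀ (x : ℕ) (L l : List ℕ), (∀ a ∈ L, a < x) →
      (l ∈ outs ins w x L ↔ Good ins w x l ∧ l.filter (· < x) = L) := by
  induction w with
  | nil =>
    intro x L l hL
    cases L with
    | nil => simp [outs, Good]; rintro rfl; simp
    | cons c L => simp [outs, Good]; rintro rfl; simp
  | cons s w ih =>
    intro x L l hL
    cases s with
    | true =>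
      simp only [outs, Good, List.mem_flatMap]
      constructor
      · rintro ⟨L', h1, h2⟩
        obtain ⟨pre, post, rfl, rfl⟩ := hi.split _ _ _ h1
        have hlt : ∀ a ∈ pre ++ x :: post, a < x + 1 := by
          intro a ha
          simp only [List.mem_append, List.mem_cons] at ha hL
          rcases ha with ha | rfl | ha
          · have := hL a (Or.inl ha); omega
          · omega
          · have := hL a (Or.inr ha); omega
        obtain ⟨h3, h4⟩ := (ih _ _ _ hlt).1 h2
        have h5 : l.filter (· < x) = pre ++ post := by
          rw [← filter_lt_filter_succ, h4, filter_insert hL]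
        rw [h4, h5]
        exact ⟨⟨h1, h3⟩, rfl⟩
      · rintro ⟨⟨h1, h2⟩, rfl⟩
        refine ⟨_, h1, (ih _ _ _ ?_).2 ⟨h2, rfl⟩⟩
        intro a ha
        simpa using List.of_mem_filter ha
    | false =>
      cases L with
      | nil =>
        simp only [outs, Good, List.not_mem_nil, false_iff]
        rintro ⟨⟨c, l', rfl, hc, -⟩, h⟩
        simp [hc] at h
      | cons c L =>
        have hc : c < x := hL c (by simp)
        have hL' : ∀ a ∈ L, a < x := fun a ha => hL a (by simp [ha])
        simp only [outs, Good, List.mem_map]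
        constructor
        · rintro ⟨l', h, rfl⟩
          obtain ⟨h1, h2⟩ := (ih _ _ _ hL').1 h
          exact ⟨⟨c, l', rfl, hc, h1⟩, by simp [hc, h2]⟩
        · rintro ⟨⟨d, l', rfl, hd, h1⟩, h2⟩
          simp [hd] at h2
          obtain ⟨rfl, h2⟩ := h2
          exact ⟨l', (ih _ _ _ hL').2 ⟨h1, by simpa using h2⟩, rfl⟩

lemma nodup_outs {ins : ℕ → List ℕ → List (List ℕ)} (hi : IsInsertion ins) (w : List Bool) :
    ∀ (x : ℕ) (L : List ℕ), (∀ a ∈ L, a < x) → (outs ins w x L).Nodup := by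
  induction w with
  | nil => intro x L _; cases L <;> simp [outs]
  | cons s w ih =>
    intro x L hL
    cases s with
    | true =>
      have hlt : ∀ L' ∈ ins x L, ∀ a ∈ L', a < x + 1 := by
        intro L' h1
        obtain ⟨pre, post, rfl, rfl⟩ := hi.split _ _ _ h1
        intro a ha
        simp only [List.mem_append, List.mem_cons] at ha hL
        rcases ha with ha | rfl | ha
        · have := hL a (Or.inl ha); omega
        · omega
        · have := hL a (Or.inr ha); omega
      simp only [outs]
      rw [List.nodup_flatMap]
      refine ⟨fun L' h => ih _ _ (hlt L' h), ?_⟩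
      refine List.Nodup.pairwise_of_forall_ne
        (hi.nodup x L (fun h => lt_irrefl _ (hL x h))) ?_
      intro a ha b hb hab l hla hlb
      exact hab (((mem_outs hi w _ _ _ (hlt a ha)).1 hla).2.symm.trans
        ((mem_outs hi w _ _ _ (hlt b hb)).1 hlb).2)
    | false =>
      cases L with
      | nil => simp [outs]
      | cons c L =>
        exact (ih _ _ (fun a ha => hL a (by simp [ha]))).map List.cons_injective

/-! ### Counting runs by their descent data -/

/-- Runs of an abstract machine with states `Option (List Bool)`, the state `none` being the
empty one: `succ` lists the states after an East step, `pop` is the effect of a North step. -/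
def cnt (succ : Option (List Bool) → List (Option (List Bool)))
    (pop : List Bool → Option (List Bool)) : List Bool → Option (List Bool) → ℕ
  | [], none => 1
  | [], some _ => 0
  | true :: w, s => ((succ s).map (cnt succ pop w)).sum
  | false :: _, none => 0
  | false :: w, some t => cnt succ pop w (pop t)

/-- The runs of the machine can be counted on abstract states, whenever `abs` attaches to each list a
state that determines the states after the next step. -/
lemma length_outs {ins : ℕ → List ℕ → List (List ℕ)} (hi : IsInsertion ins)
    {succ : Option (List Bool) → List (Option (List Bool))}
    {pop : List Bool → Option (List Bool)}
    (abs : List ℕ → Option (List Bool))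
    (habs : abs [] = none)
    (hpop : ∀ c L, ∃ t, abs (c :: L) = some t ∧ pop t = abs L)
    (hsucc : ∀ x L, (∀ a ∈ L, a < x) → (ins x L).map abs = succ (abs L)) (w : List Bool) :
    ∀ (x : ℕ) (L : List ℕ), (∀ a ∈ L, a < x) →
      (outs ins w x L).length = cnt succ pop w (abs L) := by
  induction w with
  | nil =>
    intro x L _
    cases L with
    | nil => simp [outs, habs, cnt]
    | cons c L => obtain ⟨t, h, _⟩ := hpop c L; simp [outs, h, cnt]
  | cons s w ih =>
    intro x L hL
    cases s with
    | true =>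
      simp only [outs, cnt]
      rw [List.length_flatMap, ← hsucc x L hL, List.map_map]
      congr 1
      refine List.map_congr_left ?_
      intro L' h1
      obtain ⟨pre, post, rfl, rfl⟩ := hi.split _ _ _ h1
      refine ih _ _ ?_
      intro a ha
      simp only [List.mem_append, List.mem_cons] at ha hL
      rcases ha with ha | rfl | ha
      · have := hL a (Or.inl ha); omega
      · omega
      · have := hL a (Or.inr ha); omega
    | false =>
      cases L with
      | nil => simp [outs, habs, cnt]
      | cons c L =>
        obtain ⟨t, h, h'⟩ := hpop c L
        simp only [outs, h, cnt, List.length_map, h']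
        exact ih _ _ (fun a ha => hL a (by simp [ha]))

/-- For each entry of a list, whether the pair formed with its predecessor breaks `r`;
`p` is the predecessor of the first entry. -/
def brk (r : ℕ → ℕ → Bool) : ℕ → List ℕ → List Bool
  | _, [] => []
  | p, d :: t => (!r p d) :: brk r d t

/-- The state attached to a list of live columns: `none` for the empty list, otherwise the
positions of the breaks of the relation `r`. -/
def brkState (r : ℕ → ℕ → Bool) : List ℕ → Option (List Bool)
  | [] => none
  | c :: t => some (brk r c t)

/-- North step removing the first live column. -/
def popFirst : List Bool → Option (List Bool)
  | [] => none
  | _ :: t => some t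

/-- North step removing the last live column. -/
def popLast : List Bool → Option (List Bool)
  | [] => none
  | a :: t => some (a :: t).dropLast

/-- Insertion of a maximum into an increasing run (pattern 213): there is no break in front of
the maximum and there is one behind it. -/
def insTA : List Bool → List (List Bool)
  | [] => [[false]]
  | true :: t => [false :: true :: t]
  | false :: t => (false :: true :: t) :: (insTA t).map (false :: ·)

/-- Insertion of a maximum into a decreasing run (patterns 123 and 321): there is a break in front
of the maximum and there is none behind it. -/
def insTB : List Bool → List (List Bool)
  | [] => [[true]]
  | true :: t => [true :: false :: t]
  | false :: t => (true :: false :: t) :: (insTB t).map (false :: ·)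

/-- East step for the pattern 213. -/
def succA : Option (List Bool) → List (Option (List Bool))
  | none => [some []]
  | some t => some (true :: t) :: (insTA t).map some

/-- East step for the patterns 123 and 321. -/
def succB : Option (List Bool) → List (Option (List Bool))
  | none => [some []]
  | some t => some (false :: t) :: (insTB t).map some

/-- Being smaller, as a Boolean relation. -/
def ltB (a b : ℕ) : Bool := decide (a < b)

/-- Being greater, as a Boolean relation. -/
def gtB (a b : ℕ) : Bool := decide (b < a)

lemma insAft_ltB (x : ℕ) (t : List ℕ) : ∀ p, p < x → (∀ a ∈ t, a < x) →
    (insAft ltB x p t).map (brk ltB p) = insTA (brk ltB p t) := by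
  induction t with
  | nil => intro p hp _; simp [insAft, brk, insTA, ltB, hp]
  | cons d t ih =>
    intro p hp ht
    have hd : d < x := ht d (by simp)
    have hxd : ¬ x < d := by omega
    have := ih d hd (fun a ha => ht a (by simp [ha]))
    by_cases h : p < d
    · simp only [insAft, brk, insTA, ltB, hp, h, hxd, decide_true, decide_false, Bool.not_true,
        Bool.not_false, if_true, List.map_cons, List.map_map]
      rw [← this, List.map_map]
      congr 1
      refine List.map_congr_left ?_
      intro u _
      simp [brk, ltB, h]
    · simp [insAft, brk, insTA, ltB, hp, h, hxd]

lemma insAft_gtB (x : ℕ) (t : List ℕ) : ∀ p, p < x → (∀ a ∈ t, a < x) →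
    (insAft gtB x p t).map (brk gtB p) = insTB (brk gtB p t) := by
  induction t with
  | nil =>
    intro p hp _
    have : ¬ x < p := by omega
    simp [insAft, brk, insTB, gtB, this]
  | cons d t ih =>
    intro p hp ht
    have hd : d < x := ht d (by simp)
    have hxp : ¬ x < p := by omega
    have := ih d hd (fun a ha => ht a (by simp [ha]))
    by_cases h : d < p
    · simp only [insAft, brk, insTB, gtB, hd, h, hxp, decide_true, decide_false, Bool.not_true,
        Bool.not_false, if_true, List.map_cons, List.map_map]
      rw [← this, List.map_map]
      congr 1
      refine List.map_congr_left ?_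
      intro u _
      simp [brk, gtB, h]
    · simp [insAft, brk, insTB, gtB, hd, h, hxp]

lemma brkState_insF_ltB (x : ℕ) (L : List ℕ) (hL : ∀ a ∈ L, a < x) :
    (insF ltB x L).map (brkState ltB) = succA (brkState ltB L) := by
  cases L with
  | nil => simp [insF, brkState, brk, succA]
  | cons c t =>
    have hc : c < x := hL c (by simp)
    have hxc : ¬ x < c := by omega
    simp only [insF, brkState, succA, List.map_cons, List.map_map]
    rw [← insAft_ltB x t c hc (fun a ha => hL a (by simp [ha])), List.map_map]
    congr 1
    simp [brk, ltB, hxc]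

lemma brkState_insF_gtB (x : ℕ) (L : List ℕ) (hL : ∀ a ∈ L, a < x) :
    (insF gtB x L).map (brkState gtB) = succB (brkState gtB L) := by
  cases L with
  | nil => simp [insF, brkState, brk, succB]
  | cons c t =>
    have hc : c < x := hL c (by simp)
    simp only [insF, brkState, succB, List.map_cons, List.map_map]
    rw [← insAft_gtB x t c hc (fun a ha => hL a (by simp [ha])), List.map_map]
    congr 1
    simp [brk, gtB, hc]

lemma brkState_pop (r : ℕ → ℕ → Bool) (c : ℕ) (L : List ℕ) :
    ∃ t, brkState r (c :: L) = some t ∧ popFirst t = brkState r L := by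
  cases L <;> exact ⟨_, rfl, rfl⟩

lemma brk_concat (r : ℕ → ℕ → Bool) (L : List ℕ) : ∀ p c : ℕ, ∃ f, brk r p (L ++ [c]) = brk r p L ++ [f] := by
  induction L with
  | nil => intro p c; simp [brk]
  | cons d L ih => intro p c; obtain ⟨f, hf⟩ := ih d c; exact ⟨f, by simp [brk, hf]⟩

lemma popLast_concat (t : List Bool) (f : Bool) : popLast (t ++ [f]) = some t := by
  cases t with
  | nil => rfl
  | cons a t =>
    have : popLast (a :: (t ++ [f])) = some (a :: (t ++ [f])).dropLast := rfl
    rw [List.cons_append, this, ← List.cons_append, List.dropLast_concat]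

lemma brkState_popLast (r : ℕ → ℕ → Bool) (c : ℕ) (L : List ℕ) :
    ∃ t, brkState r (c :: L).reverse = some t ∧ popLast t = brkState r L.reverse := by
  rw [List.reverse_cons]
  cases L.reverse with
  | nil => exact ⟨[], rfl, rfl⟩
  | cons d t =>
    obtain ⟨f, hf⟩ := brk_concat r t d c
    exact ⟨brk r d (t ++ [c]), rfl, by rw [hf, popLast_concat]; rfl⟩

lemma length_outs_A (w : List Bool) :
    (outs (insF ltB) w 0 []).length = cnt succA popFirst w none :=
  length_outs (isInsertion_insF ltB) (brkState ltB) rfl (brkState_pop ltB) brkState_insF_ltB w 0 []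
    (by simp)

lemma length_outs_B (w : List Bool) :
    (outs (insF gtB) w 0 []).length = cnt succB popFirst w none :=
  length_outs (isInsertion_insF gtB) (brkState gtB) rfl (brkState_pop gtB) brkState_insF_gtB w 0 []
    (by simp)

/-- For 321 the state is that of the reversed list, so that the North step removes its last entry. -/
lemma length_outs_H (w : List Bool) :
    (outs (insR gtB) w 0 []).length = cnt succB popLast w none := by
  refine length_outs (isInsertion_insR gtB) (fun L => brkState gtB L.reverse) rfl
    (brkState_popLast gtB) ?_ w 0 [] (by simp)
  intro x L hL
  rw [← brkState_insF_gtB x L.reverse (by simpa using hL), insR, List.map_map]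
  refine List.map_congr_left ?_
  intro u _
  simp

/-! ### Comparison of 213 with 123 -/

/-- `t'` has a break only where `t` has one. -/
abbrev FewerBrk (t t' : List Bool) : Prop := List.Forall₂ (fun a a' => a' = true → a = true) t t'

lemma FewerBrk.rfl (t : List Bool) : FewerBrk t t := List.forall₂_same.2 (fun _ _ h => h)

lemma sum_insTA_mono {t t' : List Bool} (h : FewerBrk t t') : ∀ φ : List Bool → ℕ,
    (∀ u u', FewerBrk u u' → φ u ≤ φ u') →
    ((insTA t).map φ).sum ≤ ((insTA t').map φ).sum := by
  induction h with
  | nil => intro φ _; exact le_rfl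
  | @cons a a' t t' ha ht ih =>
    intro φ hφ
    have h1 : φ (false :: true :: t) ≤ φ (false :: true :: t') :=
      hφ _ _ (.cons (fun h => h) (.cons (fun h => h) ht))
    have h2 := ih (fun u => φ (false :: u)) (fun u u' hu => hφ _ _ (.cons (fun h => h) hu))
    cases a <;> cases a'
    · simp only [insTA, List.map_cons, List.sum_cons, List.map_map]
      exact Nat.add_le_add h1 h2
    · simp at ha
    · simp only [insTA, List.map_cons, List.sum_cons, List.map_nil, List.sum_nil]
      omega
    · simpa [insTA] using h1

/-- Removing breaks does not decrease the number of runs avoiding 213. -/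
lemma cntA_mono (w : List Bool) : ∀ t t' : List Bool, FewerBrk t t' →
    cnt succA popFirst w (some t) ≤ cnt succA popFirst w (some t') := by
  induction w with
  | nil => intro t t' _; simp [cnt]
  | cons s w ih =>
    intro t t' h
    cases s with
    | true =>
      simp only [cnt, succA, List.map_cons, List.sum_cons, List.map_map]
      exact Nat.add_le_add (ih _ _ (.cons (fun h => h) h)) (sum_insTA_mono h _ ih)
    | false =>
      cases h with
      | nil => exact le_rfl
      | cons _ h => exact ih _ _ h

/-- The East steps for 213 and for 123 lead to the same states, except for at most one pair,
in which the state for 123 has one break less. -/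
lemma sum_insTA_le_insTB (t : List Bool) : ∀ φ : List Bool → ℕ,
    (∀ u u', FewerBrk u u' → φ u ≤ φ u') →
    φ (true :: t) + ((insTA t).map φ).sum ≤ φ (false :: t) + ((insTB t).map φ).sum := by
  induction t with
  | nil => intro φ _; simp [insTA, insTB]; omega
  | cons a t ih =>
    intro φ hφ
    cases a with
    | true =>
      have := hφ (true :: true :: t) (true :: false :: t)
        (.cons (fun h => h) (.cons (by simp) (FewerBrk.rfl t)))
      simp [insTA, insTB]; omega
    | false =>
      have := ih (fun u => φ (false :: u)) (fun u u' hu => hφ _ _ (.cons (fun h => h) hu))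
      simp only [insTA, insTB, List.map_cons, List.sum_cons, List.map_map]
      simp only [Function.comp_def]
      omega

lemma cntA_le_cntB (w : List Bool) : ∀ s,
    cnt succA popFirst w s ≤ cnt succB popFirst w s := by
  induction w with
  | nil => intro s; cases s <;> simp [cnt]
  | cons a w ih =>
    intro s
    cases a with
    | true =>
      cases s with
      | none => simpa [cnt, succA, succB] using ih _
      | some t =>
        simp only [cnt, succA, succB, List.map_cons, List.sum_cons, List.map_map]
        refine (sum_insTA_le_insTB t (fun u => cnt succA popFirst w (some u)) (cntA_mono w)).trans ?_
        refine Nat.add_le_add (ih _) (List.sum_le_sum ?_)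
        intro u _
        exact ih _
    | false =>
      cases s with
      | none => exact le_rfl
      | some t => exact ih _

/-! ### Ballot words and the comparison of 123 with 321 -/

/-- Started at height `h`, the path of the word (`true` is up, `false` is down) never goes below
height zero. -/
def bal : ℕ → List Bool → Prop
  | _, [] => True
  | h, true :: s => bal (h + 1) s
  | 0, false :: _ => False
  | h + 1, false :: s => bal h s

/-- If the path started at height `h` goes below zero, the first down step that does so is turned
into an up step. -/
def fixW : ℕ → List Bool → List Bool
  | _, [] => []
  | h, true :: s => true :: fixW (h + 1) s
  | 0, false :: s => true :: s
  | h + 1, false :: s => false :: fixW h s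

/-- The peaks (an up step followed by a down step) of a word preceded by the letter `p`. -/
def wfl : Bool → List Bool → List Bool
  | _, [] => []
  | p, c :: t => (p && !c) :: wfl c t

/-- The state of the machines attached to a word: its peaks play the role of the breaks. -/
def wst : List Bool → Option (List Bool)
  | [] => none
  | c :: t => some (wfl c t)

/-- All insertions of a down step before, inside or after the initial run of up steps. -/
def insW : List Bool → List (List Bool)
  | [] => [[false]]
  | true :: t => (false :: true :: t) :: (insW t).map (true :: ·)
  | false :: t => [false :: false :: t]

/-- The East step `succB` lifted to ballot words: prepend an up step, or insert a down step into
the initial run of up steps and repair the result by `fixW`. -/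
def succW : List Bool → List (List Bool)
  | [] => [[true]]
  | _ :: t => (true :: true :: t) :: (insW t).map (fun u => true :: fixW 1 u)

lemma bal_mono (s : List Bool) : ∀ h, bal h s → bal (h + 1) s := by
  induction s with
  | nil => intro h _; trivial
  | cons c s ih =>
    intro h hs
    cases c
    · cases h with
      | zero => exact hs.elim
      | succ h => exact ih h hs
    · exact ih (h + 1) hs

lemma bal_count (s : List Bool) : ∀ h, bal h s → s.length ≤ 2 * s.count true + h := by
  induction s with
  | nil => intro h _; simp
  | cons c s ih =>
    intro h hs
    cases c
    · cases h with
      | zero => exact hs.elim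
      | succ h => have := ih h hs; simp; omega
    · have := ih (h + 1) hs; simp; omega

lemma length_fixW (s : List Bool) : ∀ h, (fixW h s).length = s.length := by
  induction s with
  | nil => intro h; rfl
  | cons c s ih => intro h; cases c <;> cases h <;> simp [fixW, ih]

lemma fixW_of_bal (s : List Bool) : ∀ h, bal h s → fixW h s = s := by
  induction s with
  | nil => intro h _; rfl
  | cons c s ih =>
    intro h hs
    cases c
    · cases h with
      | zero => exact hs.elim
      | succ h => simp [fixW, ih h hs]
    · simp [fixW, ih (h + 1) hs]

lemma count_fixW (s : List Bool) : ∀ h, ¬ bal h s →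
    (fixW h s).count true = s.count true + 1 := by
  induction s with
  | nil => intro h hs; exact absurd trivial hs
  | cons c s ih =>
    intro h hs
    cases c
    · cases h with
      | zero => simp [fixW]
      | succ h => simp [fixW, ih h hs]
    · simp [fixW, ih (h + 1) hs]

lemma bal_fixW (s : List Bool) : ∀ h, bal (h + 1) s → bal h (fixW h s) := by
  induction s with
  | nil => intro h _; trivial
  | cons c s ih =>
    intro h hs
    cases c
    · cases h with
      | zero => exact bal_mono s 0 hs
      | succ h => exact ih h hs
    · exact ih (h + 1) hs

lemma not_bal_fixW (s : List Bool) : ∀ h, ¬ bal (h + 1) s → ¬ bal h (fixW (h + 1) s) := by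
  induction s with
  | nil => intro h hs; exact absurd trivial hs
  | cons c s ih =>
    intro h hs
    cases c
    · cases h with
      | zero => exact fun h => h
      | succ h => exact ih h hs
    · exact ih (h + 1) hs

lemma fixW_inj_aux (s : List Bool) : ∀ h t, bal (h + 1) s → bal (h + 1) t → ¬ bal h s → ¬ bal h t →
    fixW h s = fixW h t → s = t := by
  induction s with
  | nil => intro h t _ _ hs; exact absurd trivial hs
  | cons c s ih =>
    intro h t hs ht hs' ht' he
    cases t with
    | nil => exact absurd trivial ht'
    | cons d t =>
      cases c <;> cases d
      · cases h with
        | zero => simpa [fixW] using he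
        | succ h =>
          simp only [fixW, List.cons.injEq, true_and] at he
          rw [ih h t hs ht hs' ht' he]
      · cases h with
        | zero =>
          simp only [fixW, List.cons.injEq, true_and] at he
          exact absurd (he ▸ (show bal 0 s from hs)) (not_bal_fixW t 0 ht')
        | succ h => simp [fixW] at he
      · cases h with
        | zero =>
          simp only [fixW, List.cons.injEq, true_and] at he
          exact absurd (he ▸ (show bal 0 t from ht)) (not_bal_fixW s 0 hs')
        | succ h => simp [fixW] at he
      · simp only [fixW, List.cons.injEq, true_and] at he
        rw [ih (h + 1) t hs ht hs' ht' he]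

lemma fixW_inj {h : ℕ} {s t : List Bool} (hs : bal (h + 1) s) (ht : bal (h + 1) t)
    (hc : s.count true = t.count true) (he : fixW h s = fixW h t) : s = t := by
  by_cases hs' : bal h s <;> by_cases ht' : bal h t
  · rwa [fixW_of_bal s h hs', fixW_of_bal t h ht'] at he
  · have := count_fixW t h ht'
    rw [← he, fixW_of_bal s h hs'] at this
    omega
  · have := count_fixW s h hs'
    rw [he, fixW_of_bal t h ht'] at this
    omega
  · exact fixW_inj_aux s h t hs ht hs' ht' he

/-- A path ending above height zero is in the image of `fixW h`, as soon as `h = 0` or the path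
touches height zero: turn back the last up step leaving height zero. -/
lemma exists_fixW (s : List Bool) : ∀ h, bal h s → s.length < 2 * s.count true + h →
    (∀ h', h = h' + 1 → ¬ bal h' s) →
    ∃ t, bal (h + 1) t ∧ ¬ bal h t ∧ fixW h t = s := by
  induction s with
  | nil =>
    intro h _ hl hf
    cases h with
    | zero => simp at hl
    | succ h => exact absurd trivial (hf h rfl)
  | cons c s ih =>
    intro h hs hl hf
    cases c
    · cases h with
      | zero => exact hs.elim
      | succ h =>
        obtain ⟨t, h1, h2, h3⟩ := ih h hs (by simp at hl; omega)
          (fun h' hh => by subst hh; exact hf (h' + 1) rfl)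
        exact ⟨false :: t, h1, h2, by simp [fixW, h3]⟩
    · by_cases hb : h = 0 ∧ bal 0 s
      · obtain ⟨rfl, hb⟩ := hb
        exact ⟨false :: s, hb, fun h => h, rfl⟩
      · obtain ⟨t, h1, h2, h3⟩ := ih (h + 1) hs (by simp at hl; omega)
          (fun h' hh => by
            obtain rfl : h = h' := by omega
            cases h with
            | zero => simpa using hb
            | succ h => exact hf h rfl)
        exact ⟨true :: t, h1, h2, by simp [fixW, h3]⟩

/-- `fixW` does not change the peaks: the step it turns is preceded by a down step and followed by
an up step. -/
lemma wfl_fixW (s : List Bool) : ∀ h p, bal (h + 1) s → (h = 0 → p = false) →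
    wfl p (fixW h s) = wfl p s := by
  induction s with
  | nil => intro h p _ _; rfl
  | cons c s ih =>
    intro h p hs hp
    cases c
    · cases h with
      | zero =>
        obtain rfl := hp rfl
        cases s with
        | nil => rfl
        | cons d s =>
          cases d
          · exact hs.elim
          · rfl
      | succ h => simp [fixW, wfl, ih h false hs (fun _ => rfl)]
    · simp [fixW, wfl, ih (h + 1) true hs (by omega)]

lemma wst_fixW (s : List Bool) (hs : bal 1 s) : wst (fixW 0 s) = wst s := by
  cases s with
  | nil => rfl
  | cons c s =>
    cases c
    · cases s with
      | nil => rfl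
      | cons d s =>
        cases d
        · exact hs.elim
        · rfl
    · simp [fixW, wst, wfl_fixW s 1 true hs (by omega)]

lemma insTB_wfl (t : List Bool) : insTB (wfl true t) = (insW t).map (wfl true) := by
  induction t with
  | nil => rfl
  | cons c t ih =>
    cases c
    · rfl
    · simp [wfl, insTB, insW, ih]

lemma of_mem_insW (t : List Bool) : ∀ u ∈ insW t, u.count true = t.count true ∧
    u.length = t.length + 1 ∧ u.erase false = t ∧ ∀ h, bal h t → bal (h + 1) u := by
  induction t with
  | nil => intro u hu; simp [insW] at hu; subst hu; simp [bal]
  | cons c t ih =>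
    intro u hu
    cases c
    · simp [insW] at hu; subst hu
      exact ⟨by simp, by simp, by simp, fun h hh => hh⟩
    · simp only [insW, List.mem_cons, List.mem_map] at hu
      rcases hu with rfl | ⟨u, hu, rfl⟩
      · exact ⟨by simp, by simp, by simp, fun h hh => hh⟩
      · obtain ⟨h1, h2, h3, h4⟩ := ih u hu
        exact ⟨by simp [h1], by simp [h2], by simp [h3], fun h hh => h4 (h + 1) hh⟩

lemma mem_insW_erase (u : List Bool) : false ∈ u → u ∈ insW (u.erase false) := by
  induction u with
  | nil => simp
  | cons c u ih =>
    intro h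
    cases c
    · cases u with
      | nil => simp [insW]
      | cons d u => cases d <;> simp [insW]
    · simp only [List.mem_cons, Bool.false_eq_true, false_or] at h
      rw [List.erase_cons_tail (by simp)]
      simp [insW, ih h]

lemma bal_erase (u : List Bool) : ∀ h, false ∈ u → bal (h + 1) u → bal h (u.erase false) := by
  induction u with
  | nil => simp
  | cons c u ih =>
    intro h hm hb
    cases c
    · rw [List.erase_cons_head]; exact hb
    · simp only [List.mem_cons, Bool.false_eq_true, false_or] at hm
      rw [List.erase_cons_tail (by simp)]
      exact ih (h + 1) hm hb

lemma nodup_insW (t : List Bool) : (insW t).Nodup := by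
  induction t with
  | nil => simp [insW]
  | cons c t ih =>
    cases c
    · simp [insW]
    · refine List.nodup_cons.2 ⟨by simp, ih.map List.cons_injective⟩

/-- Ballot words ending at height `e` and having `m` down steps. -/
noncomputable def W (e m : ℕ) : Finset (List Bool) := by
  classical
  exact (List.finite_length_eq Bool (e + 2 * m)).toFinset.filter
    (fun s => s.count true = e + m ∧ bal 0 s)

lemma mem_W {e m : ℕ} {s : List Bool} :
    s ∈ W e m ↔ s.length = e + 2 * m ∧ s.count true = e + m ∧ bal 0 s := by
  simp [W]

/-- The ballot words to which an East step lowering the final height leads from `W e m`; there are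
none for `e = 0`. -/
noncomputable def Wdown : ℕ → ℕ → Finset (List Bool)
  | 0, _ => ∅
  | e + 1, m => W e (m + 1)

lemma mem_Wdown {e m : ℕ} {s : List Bool} :
    s ∈ Wdown e m ↔ s.length = e + 2 * m + 1 ∧ s.count true = e + m ∧ bal 0 s ∧ e ≠ 0 := by
  cases e with
  | zero => simp [Wdown]
  | succ e =>
    simp only [Wdown, mem_W]
    constructor
    · rintro ⟨h1, h2, h3⟩; exact ⟨by omega, by omega, h3, by omega⟩
    · rintro ⟨h1, h2, h3, _⟩; exact ⟨by omega, by omega, h3⟩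

lemma disjoint_W (e m : ℕ) : Disjoint (W (e + 1) m) (Wdown e m) := by
  rw [Finset.disjoint_left]
  intro s h1 h2
  rw [mem_W] at h1; rw [mem_Wdown] at h2
  omega

lemma cases_bal {s : List Bool} (h : bal 0 s) : s = [] ∨ ∃ t, s = true :: t ∧ bal 1 t := by
  cases s with
  | nil => exact Or.inl rfl
  | cons c t =>
    cases c
    · exact h.elim
    · exact Or.inr ⟨t, rfl, h⟩

/-- With `succW_inj`, `succW_nodup` and `succW_surj`: `succW` sends `W e m` without repetition onto
the ballot words whose final height differs from `e` by one and whose length is one more. -/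
lemma succW_sound {e m : ℕ} {s x : List Bool} (hs : s ∈ W e m) (hx : x ∈ succW s) :
    x ∈ W (e + 1) m ∪ Wdown e m := by
  obtain ⟨hl, hc, hb⟩ := mem_W.1 hs
  rcases cases_bal hb with rfl | ⟨t, rfl, ht⟩
  · simp at hl
    simp [succW] at hx
    subst hx
    rw [Finset.mem_union]; left
    rw [mem_W]
    exact ⟨by simp; omega, by simp; omega, trivial⟩
  · simp at hl hc
    simp only [succW, List.mem_cons, List.mem_map] at hx
    rw [Finset.mem_union]
    rcases hx with rfl | ⟨u, hu, rfl⟩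
    · left
      rw [mem_W]
      exact ⟨by simp; omega, by simp; omega, bal_mono t 1 ht⟩
    · obtain ⟨h1, h2, -, h4⟩ := of_mem_insW t u hu
      have h5 := h4 1 ht
      have h6 : bal 0 (true :: fixW 1 u) := bal_fixW u 1 h5
      have h7 := length_fixW u 1
      by_cases hbu : bal 1 u
      · right
        have := bal_count u 1 hbu
        rw [mem_Wdown]
        refine ⟨by simp; omega, ?_, h6, by omega⟩
        rw [fixW_of_bal u 1 hbu]; simp; omega
      · left
        rw [mem_W]
        refine ⟨by simp; omega, ?_, h6⟩
        simp [count_fixW u 1 hbu]; omega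

lemma succW_inj {e m : ℕ} {s s' x : List Bool} (hs : s ∈ W e m) (hs' : s' ∈ W e m)
    (hx : x ∈ succW s) (hx' : x ∈ succW s') : s = s' := by
  obtain ⟨hl, hc, hb⟩ := mem_W.1 hs
  obtain ⟨hl', hc', hb'⟩ := mem_W.1 hs'
  rcases cases_bal hb with rfl | ⟨t, rfl, ht⟩
  · exact (List.length_eq_zero_iff.1 (by rw [hl', ← hl]; rfl)).symm
  rcases cases_bal hb' with rfl | ⟨t', rfl, ht'⟩
  · exact (List.length_eq_zero_iff.1 (by rw [hl, ← hl']; rfl))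
  -- a repaired word touches height zero, whereas a word with a prepended up step does not
  have key : ∀ t t' u, bal 1 t → bal 1 t' → u ∈ insW t' → t'.count true = t.count true →
      true :: t ≠ fixW 1 u := by
    intro t t' u ht ht' hu hcc he
    obtain ⟨h1, h2, -, h4⟩ := of_mem_insW t' u hu
    by_cases hbu : bal 1 u
    · rw [fixW_of_bal u 1 hbu] at he
      rw [← he] at h1
      simp at h1
      omega
    · exact not_bal_fixW u 0 hbu (he ▸ (show bal 0 (true :: t) from ht))
  simp only [succW, List.mem_cons, List.mem_map] at hx hx'
  have hcc : t.count true = t'.count true := by simp at hc hc'; omega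
  rcases hx with rfl | ⟨u, hu, rfl⟩
  · rcases hx' with hx' | ⟨u, hu, hx'⟩
    · simpa using hx'
    · simp only [List.cons.injEq, true_and] at hx'
      exact absurd hx'.symm (key t t' u ht ht' hu hcc.symm)
  · rcases hx' with hx' | ⟨u', hu', hx'⟩
    · simp only [List.cons.injEq, true_and] at hx'
      exact absurd hx'.symm (key t' t u ht' ht hu hcc)
    · simp only [List.cons.injEq, true_and] at hx'
      obtain ⟨h1, h2, h3, h4⟩ := of_mem_insW t u hu
      obtain ⟨h1', h2', h3', h4'⟩ := of_mem_insW t' u' hu'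
      have := fixW_inj (h4 1 ht) (h4' 1 ht') (by omega) hx'.symm
      rw [← h3, ← h3', this]

lemma succW_nodup {e m : ℕ} {s : List Bool} (hs : s ∈ W e m) : (succW s).Nodup := by
  obtain ⟨hl, hc, hb⟩ := mem_W.1 hs
  rcases cases_bal hb with rfl | ⟨t, rfl, ht⟩
  · simp [succW]
  · refine List.nodup_cons.2 ⟨?_, ?_⟩
    · simp only [List.mem_map, List.cons.injEq, true_and, not_exists, not_and]
      intro u hu he
      obtain ⟨h1, -, -, h4⟩ := of_mem_insW t u hu
      by_cases hbu : bal 1 u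
      · rw [fixW_of_bal u 1 hbu] at he
        rw [he] at h1
        simp at h1
      · exact not_bal_fixW u 0 hbu (he ▸ (show bal 0 (true :: t) from ht))
    · refine (List.nodup_map_iff_inj_on (nodup_insW t)).2 ?_
      intro u hu u' hu' he
      obtain ⟨h1, -, -, h4⟩ := of_mem_insW t u hu
      obtain ⟨h1', -, -, h4'⟩ := of_mem_insW t u' hu'
      exact fixW_inj (h4 1 ht) (h4' 1 ht) (by omega) (List.cons.inj he).2

lemma false_mem_of_not_bal (u : List Bool) : ∀ h, ¬ bal h u → false ∈ u := by
  induction u with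
  | nil => intro h hu; exact absurd trivial hu
  | cons c u ih =>
    intro h hu
    cases c
    · simp
    · simp [ih (h + 1) hu]

lemma succW_surj {e m : ℕ} {x : List Bool} (hx : x ∈ W (e + 1) m ∪ Wdown e m) :
    ∃ s ∈ W e m, x ∈ succW s := by
  have main : ∀ u, bal 2 u → false ∈ u → u.length = e + 2 * m → u.count true + 1 = e + m →
      ∃ s ∈ W e m, true :: fixW 1 u ∈ succW s := by
    intro u h1 h2 h3 h4
    have hu := mem_insW_erase u h2
    obtain ⟨h5, h6, -, -⟩ := of_mem_insW _ u hu
    refine ⟨true :: u.erase false, ?_, ?_⟩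
    · rw [mem_W]
      exact ⟨by simp only [List.length_cons]; omega, by simp only [List.count_cons_self]; omega,
        bal_erase u 1 h2 h1⟩
    · simp only [succW, List.mem_cons, List.mem_map]
      exact Or.inr ⟨u, hu, rfl⟩
  rw [Finset.mem_union] at hx
  rcases hx with hx | hx
  · obtain ⟨hl, hc, hb⟩ := mem_W.1 hx
    rcases cases_bal hb with rfl | ⟨u, rfl, hu⟩
    · simp at hl; omega
    simp at hl hc
    by_cases hu0 : bal 0 u
    · rcases cases_bal hu0 with rfl | ⟨t, rfl, ht⟩
      · refine ⟨[], ?_, by simp [succW]⟩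
        rw [mem_W]
        simp at hl hc
        exact ⟨by simp; omega, by simp; omega, trivial⟩
      · refine ⟨true :: t, ?_, by simp [succW]⟩
        rw [mem_W]
        simp at hl hc
        exact ⟨by simp; omega, by simp; omega, ht⟩
    · obtain ⟨v, h1, h2, h3⟩ := exists_fixW u 1 hu (by omega)
        (fun h' hh => by obtain rfl : h' = 0 := by omega
                         exact hu0)
      have h4 := length_fixW v 1
      have h5 := count_fixW v 1 h2
      rw [h3] at h4 h5
      have := main v h1 (false_mem_of_not_bal v 1 h2) (by omega) (by omega)
      rwa [h3] at this
  · obtain ⟨hl, hc, hb, he⟩ := mem_Wdown.1 hx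
    rcases cases_bal hb with rfl | ⟨u, rfl, hu⟩
    · simp at hl
    simp at hl hc
    have hf : false ∈ u := by
      by_contra hf
      have : u.count true = u.length := by
        rw [List.count_eq_length]
        intro b hb
        cases b
        · exact absurd hb hf
        · rfl
      omega
    have := main u (bal_mono u 1 hu) hf (by omega) (by omega)
    rwa [fixW_of_bal u 1 hu] at this

lemma map_wst_succW {s : List Bool} (hb : bal 0 s) : (succW s).map wst = succB (wst s) := by
  rcases cases_bal hb with rfl | ⟨t, rfl, ht⟩
  · rfl
  · simp only [succW, wst, succB, List.map_cons, List.map_map, insTB_wfl]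
    congr 1
    refine List.map_congr_left ?_
    intro u hu
    obtain ⟨-, -, -, h4⟩ := of_mem_insW t u hu
    simp [wst, wfl_fixW u 1 true (h4 1 ht) (by omega)]

/-- An East step, summed over all ballot words of one kind, changes the final height by one in
either direction. -/
lemma sum_succB (e m : ℕ) (φ : Option (List Bool) → ℕ) :
    ∑ s ∈ W e m, ((succB (wst s)).map φ).sum =
      ∑ s ∈ W (e + 1) m, φ (wst s) + ∑ s ∈ Wdown e m, φ (wst s) := by
  classical
  have h1 : ∀ s ∈ W e m, ((succB (wst s)).map φ).sum = ∑ x ∈ (succW s).toFinset, φ (wst x) := by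
    intro s hs
    rw [← map_wst_succW (mem_W.1 hs).2.2, List.map_map, List.sum_toFinset _ (succW_nodup hs)]
    rfl
  rw [Finset.sum_congr rfl h1, ← Finset.sum_union (disjoint_W e m), ← Finset.sum_biUnion]
  · congr 1
    ext x
    simp only [Finset.mem_biUnion, List.mem_toFinset]
    exact ⟨fun ⟨s, hs, hx⟩ => succW_sound hs hx, fun hx => succW_surj hx⟩
  · intro s hs s' hs' hne
    rw [Function.onFun, Finset.disjoint_left]
    intro x hx hx'
    rw [List.mem_toFinset] at hx hx'
    exact hne (succW_inj hs hs' hx hx')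

/-- Walks on partitions `(e + m, m)` with at most two rows: an East step adds a cell, a North step
removes one, and the walk ends at the empty partition. -/
def walks : List Bool → ℕ → ℕ → ℕ
  | [], e, m => if e = 0 ∧ m = 0 then 1 else 0
  | true :: w, 0, m => walks w 1 m
  | true :: w, e + 1, m => walks w (e + 2) m + walks w e (m + 1)
  | false :: _, 0, 0 => 0
  | false :: w, e + 1, 0 => walks w e 0
  | false :: w, 0, m + 1 => walks w 1 m
  | false :: w, e + 1, m + 1 => walks w e (m + 1) + walks w (e + 2) m

lemma sum_nil (succ pop) (e m : ℕ) : ∑ s ∈ W e m, cnt succ pop [] (wst s) = walks [] e m := by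
  by_cases h : e = 0 ∧ m = 0
  · obtain ⟨rfl, rfl⟩ := h
    have : W 0 0 = {[]} := by
      ext s
      rw [mem_W]
      simp only [Finset.mem_singleton]
      constructor
      · rintro ⟨h, -⟩; simpa using h
      · rintro rfl; simp [bal]
    rw [this]; simp [walks, wst, cnt]
  · simp only [walks, if_neg h]
    refine Finset.sum_eq_zero ?_
    intro s hs
    cases s with
    | nil => have := (mem_W.1 hs).1; simp at this; omega
    | cons c t => rfl

/-- The words reached from `W e m` by a North step. -/
noncomputable def Wnorth : ℕ → ℕ → Finset (List Bool)
  | 0, 0 => ∅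
  | e + 1, 0 => W e 0
  | 0, m + 1 => W 1 m
  | e + 1, m + 1 => W e (m + 1) ∪ W (e + 2) m

lemma mem_Wnorth {e m : ℕ} {s : List Bool} : s ∈ Wnorth e m ↔
    s.length + 1 = e + 2 * m ∧ bal 0 s ∧ (s.count true + 1 = e + m ∧ e ≠ 0 ∨
      s.count true = e + m ∧ m ≠ 0) := by
  cases e <;> cases m <;> simp only [Wnorth, Finset.mem_union, mem_W, Finset.notMem_empty]
  · simp
  · constructor
    · rintro ⟨h1, h2, h3⟩; exact ⟨by omega, h3, by omega⟩
    · rintro ⟨h1, h2, h3⟩; exact ⟨by omega, by omega, h2⟩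
  · constructor
    · rintro ⟨h1, h2, h3⟩; exact ⟨by omega, h3, by omega⟩
    · rintro ⟨h1, h2, h3⟩; exact ⟨by omega, by omega, h2⟩
  · constructor
    · rintro (⟨h1, h2, h3⟩ | ⟨h1, h2, h3⟩) <;> exact ⟨by omega, h3, by omega⟩
    · rintro ⟨h1, h2, h3 | h3⟩
      · exact Or.inl ⟨by omega, by omega, h2⟩
      · exact Or.inr ⟨by omega, by omega, h2⟩

/-- A comparison `R` with `walks w`, valid on every `W e m`, passes to the words reached by a North
step. -/
lemma sum_Wnorth (w : List Bool) (e m : ℕ) (ψ : List Bool → ℕ) (P : ℕ → ℕ → ℕ)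
    (hP : ∀ e m, P e m = walks w e m)
    (R : ℕ → ℕ → Prop) (hR : ∀ a b c d, R a b → R c d → R (a + c) (b + d)) (hR0 : R 0 0)
    (h : ∀ e m, R (∑ s ∈ W e m, ψ s) (P e m)) :
    R (∑ s ∈ Wnorth e m, ψ s) (walks (false :: w) e m) := by
  classical
  cases e <;> cases m <;> simp only [Wnorth, walks, ← hP]
  · simpa using hR0
  · exact h _ _
  · exact h _ _
  · rw [Finset.sum_union]
    · exact hR _ _ _ _ (h _ _) (h _ _)
    · rw [Finset.disjoint_left]
      intro s h1 h2
      rw [mem_W] at h1 h2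
      omega

/-- For 123 a North step deletes the first letter, an up step, and `fixW` makes the rest a ballot word
with the same peaks. -/
lemma sumB_le_walks (w : List Bool) : ∀ e m,
    ∑ s ∈ W e m, cnt succB popFirst w (wst s) ≤ walks w e m := by
  classical
  induction w with
  | nil => intro e m; exact (sum_nil _ _ e m).le
  | cons a w ih =>
    intro e m
    cases a with
    | true =>
      simp only [cnt]
      rw [sum_succB]
      cases e with
      | zero => simpa [Wdown, walks] using ih _ _
      | succ e => exact Nat.add_le_add (ih _ _) (ih _ _)
    | false =>
      refine le_trans ?_ (sum_Wnorth w e m (fun s => cnt succB popFirst w (wst s)) _ (fun _ _ => rfl)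
        (· ≤ ·) (fun a b c d => Nat.add_le_add) le_rfl ih)
      by_cases h0 : e = 0 ∧ m = 0
      · obtain ⟨rfl, rfl⟩ := h0
        refine le_of_eq_of_le (Finset.sum_eq_zero ?_) (Nat.zero_le _)
        intro s hs
        have := (mem_W.1 hs).1
        obtain rfl : s = [] := by simpa using this
        rfl
      have hcons : ∀ s ∈ W e m, ∃ t, s = true :: t ∧ bal 1 t ∧ t.length + 1 = e + 2 * m ∧
          t.count true + 1 = e + m := by
        intro s hs
        obtain ⟨hl, hc, hb⟩ := mem_W.1 hs
        rcases cases_bal hb with rfl | ⟨t, rfl, ht⟩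
        · simp at hl; omega
        · exact ⟨t, rfl, ht, by simpa using hl, by simpa using hc⟩
      have h1 : ∀ s ∈ W e m, cnt succB popFirst (false :: w) (wst s) =
          cnt succB popFirst w (wst (fixW 0 s.tail)) := by
        intro s hs
        obtain ⟨t, rfl, ht, -⟩ := hcons s hs
        rw [List.tail_cons, wst_fixW t ht]
        cases t <;> rfl
      rw [Finset.sum_congr rfl h1, ← Finset.sum_image (g := fun s : List Bool => fixW 0 s.tail)
        (f := fun x => cnt succB popFirst w (wst x))]
      · refine Finset.sum_le_sum_of_subset ?_
        intro x hx
        obtain ⟨s, hs, rfl⟩ := Finset.mem_image.1 hx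
        obtain ⟨t, rfl, ht, hl, hc⟩ := hcons s hs
        simp only [List.tail_cons]
        rw [mem_Wnorth, length_fixW]
        refine ⟨hl, bal_fixW t 0 ht, ?_⟩
        by_cases hb : bal 0 t
        · have := bal_count t 0 hb
          rw [fixW_of_bal t 0 hb]; omega
        · have : false ∈ t := false_mem_of_not_bal t 0 hb
          have : t.count true < t.length := by
            refine lt_of_le_of_ne List.count_le_length ?_
            intro h
            have := List.count_eq_length.1 h false this
            simp at this
          rw [count_fixW t 0 hb]; omega
      · intro s hs s' hs' he
        obtain ⟨t, rfl, ht, hl, hc⟩ := hcons s hs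
        obtain ⟨t', rfl, ht', hl', hc'⟩ := hcons s' hs'
        rw [fixW_inj ht ht' (by omega) he]

lemma wfl_concat (s : List Bool) : ∀ p c : Bool, ∃ f, wfl p (s ++ [c]) = wfl p s ++ [f] := by
  induction s with
  | nil => intro p c; simp [wfl]
  | cons d s ih => intro p c; obtain ⟨f, hf⟩ := ih d c; exact ⟨f, by simp [wfl, hf]⟩

lemma cnt_wst_concat (succ) (w s : List Bool) (c : Bool) :
    cnt succ popLast (false :: w) (wst (s ++ [c])) = cnt succ popLast w (wst s) := by
  cases s with
  | nil => rfl
  | cons d s =>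
    obtain ⟨f, hf⟩ := wfl_concat s d c
    simp only [List.cons_append, wst, cnt, hf, popLast_concat]

lemma bal_concat (s : List Bool) : ∀ h c, bal h s → (c = false → s.length < 2 * s.count true + h) →
    bal h (s ++ [c]) := by
  induction s with
  | nil =>
    intro h c _ hc
    cases c
    · cases h with
      | zero => simp at hc
      | succ h => trivial
    · trivial
  | cons d s ih =>
    intro h c hs hc
    cases d
    · cases h with
      | zero => exact hs.elim
      | succ h => exact ih h c hs (fun h => by have := hc h; simp at this; omega)
    · exact ih (h + 1) c hs (fun h => by have := hc h; simp at this; omega)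

/-- For 321 a North step deletes the last letter, which keeps the word a ballot word. -/
lemma walks_le_sumH (w : List Bool) : ∀ e m,
    walks w e m ≤ ∑ s ∈ W e m, cnt succB popLast w (wst s) := by
  classical
  induction w with
  | nil => intro e m; exact (sum_nil _ _ e m).ge
  | cons a w ih =>
    intro e m
    cases a with
    | true =>
      simp only [cnt]
      rw [sum_succB]
      cases e with
      | zero => simpa [Wdown, walks] using ih _ _
      | succ e => exact Nat.add_le_add (ih _ _) (ih _ _)
    | false =>
      refine le_trans (sum_Wnorth w e m (fun s => cnt succB popLast w (wst s)) _ (fun _ _ => rfl)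
        (fun a b => b ≤ a) (fun a b c d => Nat.add_le_add) le_rfl ih) ?_
      -- the last letter is determined by the number of up steps
      let g : List Bool → List Bool := fun s => s ++ [decide (s.count true + 1 = e + m)]
      have h1 : ∀ s ∈ Wnorth e m, cnt succB popLast w (wst s) =
          cnt succB popLast (false :: w) (wst (g s)) :=
        fun s _ => (cnt_wst_concat _ w s _).symm
      rw [Finset.sum_congr rfl h1, ← Finset.sum_image (g := g)
        (f := fun x => cnt succB popLast (false :: w) (wst x))]
      · refine Finset.sum_le_sum_of_subset ?_
        intro x hx
        obtain ⟨s, hs, rfl⟩ := Finset.mem_image.1 hx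
        obtain ⟨hl, hb, hc⟩ := mem_Wnorth.1 hs
        rw [mem_W]
        refine ⟨by simp [g, hl], ?_, bal_concat s 0 _ hb ?_⟩
        · by_cases h : s.count true + 1 = e + m
          · simp [g, h]
          · simp [g, h]; omega
        · intro h
          simp at h
          omega
      · intro s _ s' _ he
        exact (List.append_inj' he rfl).1

/-- The empty state is that of the only word in `W 0 0`. -/
lemma cntB_le_cntH (w : List Bool) :
    cnt succB popFirst w none ≤ cnt succB popLast w none := by
  have hW : W 0 0 = {[]} := by
    ext s
    rw [mem_W]
    simp only [Finset.mem_singleton]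
    constructor
    · rintro ⟨h, -⟩; simpa using h
    · rintro rfl; simp [bal]
  have := (sumB_le_walks w 0 0).trans (walks_le_sumH w 0 0)
  simpa [hW, wst] using this

/-! ### Permutations as runs of the machines -/

/-- The boundary word of the diagram whose first `m` rows have lengths `B 0 ≤ B 1 ≤ …`, with the
first `x` East steps removed. -/
def wd : ℕ → (ℕ → ℕ) → ℕ → List Bool
  | 0, _, _ => []
  | m + 1, B, x => List.replicate (B 0 - x) true ++ false :: wd m (fun y => B (y + 1)) (B 0)

/-- Inserting `z` among the smaller entries of `l` is allowed by the rule `ins`. -/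
def InsOK (ins : ℕ → List ℕ → List (List ℕ)) (z : ℕ) (l : List ℕ) : Prop :=
  l.filter (· < z + 1) ∈ ins z (l.filter (· < z))

lemma good_replicate (ins : ℕ → List ℕ → List (List ℕ)) (w : List Bool) (l : List ℕ) (k : ℕ) :
    ∀ x, Good ins (List.replicate k true ++ w) x l ↔
      (∀ z, x ≤ z → z < x + k → InsOK ins z l) ∧ Good ins w (x + k) l := by
  induction k with
  | zero =>
    intro x
    simp only [List.replicate_zero, List.nil_append, add_zero]
    exact ⟨fun h => ⟨fun z h1 h2 => by omega, h⟩, fun h => h.2⟩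
  | succ k ih =>
    intro x
    simp only [List.replicate_succ, List.cons_append, Good]
    rw [ih (x + 1), show x + 1 + k = x + (k + 1) by omega]
    constructor
    · rintro ⟨h1, h2, h3⟩
      refine ⟨fun z hz hz' => ?_, h3⟩
      rcases hz.eq_or_lt with rfl | hz
      · exact h1
      · exact h2 z hz (by omega)
    · rintro ⟨h1, h2⟩
      exact ⟨h1 x le_rfl (by omega), fun z hz hz' => h1 z (by omega) (by omega), h2⟩

/-- Column `z` is inserted during the first row `y` longer than `z`, when the rows from `y` on are
still to be filled. -/
lemma good_wd (ins : ℕ → List ℕ → List (List ℕ)) (m : ℕ) :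
    ∀ (B : ℕ → ℕ) (x : ℕ) (l : List ℕ), Monotone B → x ≤ B 0 →
      (Good ins (wd m B x) x l ↔ l.length = m ∧ (∀ y < m, l.getD y 0 < B y) ∧
        ∀ y < m, ∀ z, x ≤ z → (∀ y' < y, B y' ≤ z) → z < B y → InsOK ins z (l.drop y)) := by
  induction m with
  | zero => intro B x l _ _; simp [wd, Good]
  | succ m ih =>
    intro B x l hB hx
    simp only [wd]
    rw [good_replicate, show x + (B 0 - x) = B 0 by omega]
    simp only [Good]
    have hB' : Monotone fun y => B (y + 1) := fun i j h => hB (by omega)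
    have h01 : B 0 ≤ B (0 + 1) := hB (by omega)
    constructor
    · rintro ⟨h1, c, l', rfl, hc, h2⟩
      obtain ⟨h3, h4, h5⟩ := (ih (fun y => B (y + 1)) (B 0) l' hB' h01).1 h2
      refine ⟨by simp [h3], ?_, ?_⟩
      · rintro (_ | y) hy
        · simpa using hc
        · simpa using h4 y (by omega)
      · rintro (_ | y) hy z hz hz1 hz2
        · exact h1 z hz hz2
        · exact h5 y (by omega) z (hz1 0 (by omega)) (fun y' h => hz1 (y' + 1) (by omega)) hz2
    · rintro ⟨h1, h2, h3⟩
      cases l with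
      | nil => simp at h1
      | cons c l' =>
        refine ⟨fun z hz hz' => h3 0 (by omega) z hz (by simp) hz', c, l', rfl,
          by simpa using h2 0 (by omega), ?_⟩
        refine (ih (fun y => B (y + 1)) (B 0) l' hB' h01).2 ⟨by simpa using h1, ?_, ?_⟩
        · intro y hy
          simpa using h2 (y + 1) (by omega)
        · intro y hy z hz hz1 hz2
          refine h3 (y + 1) (by omega) z (hx.trans hz) ?_ hz2
          rintro (_ | y') h
          · exact hz
          · exact hz1 y' (by omega)

lemma filter_lt_succ_of_notMem {z : ℕ} {l : List ℕ} (h : z ∉ l) :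
    l.filter (· < z + 1) = l.filter (· < z) := by
  refine List.filter_congr ?_
  intro a ha
  have : a ≠ z := by rintro rfl; exact h ha
  simp; omega

lemma mem_of_insOK {ins : ℕ → List ℕ → List (List ℕ)} (hi : IsInsertion ins) {z : ℕ}
    {l : List ℕ} (h : InsOK ins z l) : z ∈ l := by
  obtain ⟨pre, post, -, h2⟩ := hi.split _ _ _ h
  exact List.mem_of_mem_filter (h2 ▸ (by simp : z ∈ pre ++ z :: post))

lemma split_of_nodup {z : ℕ} {u v : List ℕ} (hn : (u ++ z :: v).Nodup) :
    (u ++ z :: v).filter (· < z) = u.filter (· < z) ++ v.filter (· < z) ∧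
    (u ++ z :: v).filter (· < z + 1) = u.filter (· < z) ++ z :: v.filter (· < z) ∧
    ∀ pre post, u.filter (· < z) ++ z :: v.filter (· < z) = pre ++ z :: post →
      pre = u.filter (· < z) ∧ post = v.filter (· < z) := by
  have hu : z ∉ u := by
    intro h; rw [List.nodup_append] at hn; exact hn.2.2 z h z (by simp) rfl
  have hv : z ∉ v := by
    rw [List.nodup_append] at hn; exact (List.nodup_cons.1 hn.2.1).1
  refine ⟨by simp, ?_, ?_⟩
  · rw [List.filter_append, List.filter_cons_of_pos (by simp), filter_lt_succ_of_notMem hu,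
      filter_lt_succ_of_notMem hv]
  intro pre post h1
  have h4 : z ∉ u.filter (· < z) := by simp
  have h5 : z ∉ v.filter (· < z) := by simp
  have := (List.append_cons_inj_of_notMem h4 h5).1 h1
  exact ⟨this.1.symm, this.2.2.symm⟩

lemma insOK_insF (r : ℕ → ℕ → Bool) {z : ℕ} {u v : List ℕ} (hn : (u ++ z :: v).Nodup) :
    InsOK (insF r) z (u ++ z :: v) ↔ (u.filter (· < z)).IsChain (fun a b => r a b = true) := by
  obtain ⟨h1, h2, h3⟩ := split_of_nodup hn
  rw [InsOK, mem_insF, h1, h2]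
  constructor
  · rintro ⟨pre, post, -, h5, h6⟩
    rwa [← (h3 pre post h5).1]
  · intro h
    exact ⟨_, _, rfl, rfl, h⟩

lemma insOK_insR (r : ℕ → ℕ → Bool) {z : ℕ} {u v : List ℕ} (hn : (u ++ z :: v).Nodup) :
    InsOK (insR r) z (u ++ z :: v) ↔
      (v.filter (· < z)).reverse.IsChain (fun a b => r a b = true) := by
  obtain ⟨h1, h2, h3⟩ := split_of_nodup hn
  rw [InsOK, mem_insR, h1, h2]
  constructor
  · rintro ⟨pre, post, -, h5, h6⟩
    rwa [← (h3 pre post h5).2]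
  · intro h
    exact ⟨_, _, rfl, rfl, h⟩

lemma drop_ofFn_split {n : ℕ} (g : Fin n → ℕ) (y : ℕ) (r : Fin n) (hy : y ≤ r) :
    (List.ofFn g).drop y =
      ((List.ofFn g).take r).drop y ++ g r :: (List.ofFn g).drop (r + 1) := by
  have h : List.ofFn g = (List.ofFn g).take r ++ g r :: (List.ofFn g).drop (r + 1) := by
    conv_lhs => rw [← List.take_append_drop r (List.ofFn g)]
    rw [List.drop_eq_getElem_cons (by simp)]
    simp
  conv_lhs => rw [h]
  rw [List.drop_append_of_le_length (by simp; omega)]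

lemma pairwise_below {n : ℕ} (g : Fin n → ℕ) (y : ℕ) (r : Fin n) (S : ℕ → ℕ → Prop) :
    (((List.ofFn g).take r).drop y).Pairwise S ↔
      ∀ p q : Fin n, y ≤ p → p < q → q < r → S (g p) (g q) := by
  rw [List.pairwise_iff_getElem]
  constructor
  · intro h p q h1 h2 h3
    have := h (p - y) (q - y) (by simp; omega) (by simp; omega) (by omega)
    simpa [show y + (p - y : ℕ) = p by omega, show y + (q - y : ℕ) = q by omega] using this
  · intro h i j hi hj hij
    simp at hi hj
    have := h ⟨y + i, by omega⟩ ⟨y + j, by omega⟩ (by simp) (by simpa using hij)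
      (by rw [Fin.lt_def]; simp; omega)
    simpa using this

lemma pairwise_above {n : ℕ} (g : Fin n → ℕ) (r : Fin n) (S : ℕ → ℕ → Prop) :
    ((List.ofFn g).drop (r + 1)).Pairwise S ↔
      ∀ p q : Fin n, r < p → p < q → S (g p) (g q) := by
  rw [List.pairwise_iff_getElem]
  constructor
  · intro h p q h1 h2
    have := h (p - (r + 1)) (q - (r + 1)) (by simp; omega) (by simp; omega) (by omega)
    simpa [show r + 1 + (p - (r + 1) : ℕ) = p by omega,
      show r + 1 + (q - (r + 1) : ℕ) = q by omega] using this
  · intro h i j hi hj hij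
    simp at hi hj
    have := h ⟨r + 1 + i, by omega⟩ ⟨r + 1 + j, by omega⟩ (by rw [Fin.lt_def]; simp; omega)
      (by simpa using hij)
    simpa using this

/-- The column of row `r` is inserted legally for 213 when the smaller columns in the rows from `y`
to `r` increase. -/
lemma insOK_ltB {n : ℕ} {g : Fin n → ℕ} (hg : Function.Injective g) (y : ℕ) (r : Fin n)
    (hy : y ≤ r) : InsOK (insF ltB) (g r) ((List.ofFn g).drop y) ↔
      ∀ p q : Fin n, y ≤ p → p < q → q < r → g p < g r → g q < g r → g p < g q := by
  have hn : ((List.ofFn g).drop y).Nodup :=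
    (List.nodup_ofFn.2 hg).sublist (List.drop_sublist _ _)
  rw [drop_ofFn_split g y r hy] at hn ⊢
  rw [insOK_insF _ hn]
  simp only [ltB, decide_eq_true_eq]
  rw [List.isChain_iff_pairwise, List.pairwise_filter, pairwise_below]
  simp

lemma insOK_gtB {n : ℕ} {g : Fin n → ℕ} (hg : Function.Injective g) (y : ℕ) (r : Fin n)
    (hy : y ≤ r) : InsOK (insF gtB) (g r) ((List.ofFn g).drop y) ↔
      ∀ p q : Fin n, y ≤ p → p < q → q < r → g p < g r → g q < g r → g q < g p := by
  have hn : ((List.ofFn g).drop y).Nodup :=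
    (List.nodup_ofFn.2 hg).sublist (List.drop_sublist _ _)
  rw [drop_ofFn_split g y r hy] at hn ⊢
  rw [insOK_insF _ hn]
  simp only [gtB, decide_eq_true_eq]
  have : IsTrans ℕ (fun a b => b < a) := ⟨fun a b c h1 h2 => h2.trans h1⟩
  rw [List.isChain_iff_pairwise, List.pairwise_filter, pairwise_below]
  simp

lemma insOK_rev {n : ℕ} {g : Fin n → ℕ} (hg : Function.Injective g) (y : ℕ) (r : Fin n)
    (hy : y ≤ r) : InsOK (insR gtB) (g r) ((List.ofFn g).drop y) ↔
      ∀ p q : Fin n, r < p → p < q → g p < g r → g q < g r → g p < g q := by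
  have hn : ((List.ofFn g).drop y).Nodup :=
    (List.nodup_ofFn.2 hg).sublist (List.drop_sublist _ _)
  rw [drop_ofFn_split g y r hy] at hn ⊢
  rw [insOK_insR _ hn]
  simp only [gtB, decide_eq_true_eq]
  have : IsTrans ℕ (fun a b => b < a) := ⟨fun a b c h1 h2 => h2.trans h1⟩
  rw [List.isChain_iff_pairwise, List.pairwise_reverse, List.pairwise_filter, pairwise_above]
  simp

/-- The row lengths extended to all heights by rows of length `n`. -/
def extRows {n : ℕ} (b : Fin n → ℕ) (y : ℕ) : ℕ := if h : y < n then b ⟨y, h⟩ else n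

/-- The boundary word of the diagram with row lengths `b`. -/
def bword {n : ℕ} (b : Fin n → ℕ) : List Bool := wd n (extRows b) 0

/-- The columns of the dots of `π`, listed by height. -/
def cols {n : ℕ} (π : Equiv.Perm (Fin n)) (y : Fin n) : ℕ := (π.symm y : ℕ)

lemma cols_inj {n : ℕ} (π : Equiv.Perm (Fin n)) : Function.Injective (cols π) :=
  fun _ _ h => π.symm.injective (Fin.ext h)

lemma monotone_extRows {n : ℕ} {b : Fin n → ℕ} (hmono : Monotone b)
    (hb : ∀ y : Fin n, (y : ℕ) + 1 ≤ b y ∧ b y ≤ n) : Monotone (extRows b) := by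
  intro i j hij
  unfold extRows
  split_ifs with h1 h2
  · exact hmono hij
  · exact (hb _).2
  · omega
  · exact le_rfl

lemma good_bword {n : ℕ} {b : Fin n → ℕ} (hmono : Monotone b)
    (hb : ∀ y : Fin n, (y : ℕ) + 1 ≤ b y ∧ b y ≤ n) (ins : ℕ → List ℕ → List (List ℕ))
    (l : List ℕ) : Good ins (bword b) 0 l ↔ l.length = n ∧ (∀ y : Fin n, l.getD y 0 < b y) ∧
      ∀ (y : Fin n) (z : ℕ), (∀ y' < y, b y' ≤ z) → z < b y → InsOK ins z (l.drop y) := by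
  rw [bword, good_wd ins n _ 0 l (monotone_extRows hmono hb) (Nat.zero_le _)]
  have e : ∀ y (h : y < n), extRows b y = b ⟨y, h⟩ := fun y h => by simp [extRows, h]
  refine and_congr Iff.rfl (and_congr ?_ ?_)
  · constructor
    · intro h y
      have := h y y.2
      rwa [e y y.2] at this
    · intro h y hy
      rw [e y hy]; exact h ⟨y, hy⟩
  · constructor
    · intro h y z h1 h2
      refine h y y.2 z (Nat.zero_le _) ?_ (by rw [e y y.2]; exact h2)
      intro y' hy'
      rw [e y' (by omega)]
      exact h1 _ hy'
    · intro h y hy z _ h1 h2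
      rw [e y hy] at h2
      refine h ⟨y, hy⟩ z ?_ h2
      intro y' hy'
      have := h1 y' hy'
      rwa [e y' y'.2] at this

lemma exists_first_row {n : ℕ} {b : Fin n → ℕ} {z : ℕ} {p : Fin n} (h : z < b p) :
    ∃ y ≤ p, (∀ y' < y, b y' ≤ z) ∧ z < b y := by
  induction p using WellFoundedLT.induction with
  | _ p ih =>
    by_cases h' : ∃ y' < p, z < b y'
    · obtain ⟨q, h1, h2⟩ := h'
      obtain ⟨y, h3, h4⟩ := ih q h1 h2
      exact ⟨y, h3.trans h1.le, h4⟩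
    · push Not at h'
      exact ⟨p, le_rfl, h', h⟩

/-- The permutations whose columns by height form a legal output of the machine are counted by its
runs. -/
lemma card_good {n : ℕ} {b : Fin n → ℕ} (hmono : Monotone b)
    (hb : ∀ y : Fin n, (y : ℕ) + 1 ≤ b y ∧ b y ≤ n) {ins : ℕ → List ℕ → List (List ℕ)}
    (hi : IsInsertion ins) :
    Nat.card {π : Equiv.Perm (Fin n) // Good ins (bword b) 0 (List.ofFn (cols π))} =
      (outs ins (bword b) 0 []).length := by
  have hmem : ∀ l, l ∈ outs ins (bword b) 0 [] ↔ Good ins (bword b) 0 l := by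
    intro l
    rw [mem_outs hi _ _ _ _ (by simp)]
    simp
  rw [← List.toFinset_card_of_nodup (nodup_outs hi _ _ _ (by simp)),
    ← Nat.subtype_card (p := Good ins (bword b) 0) _ (by simpa using hmem)]
  refine Nat.card_eq_of_bijective (fun π => ⟨List.ofFn (cols π.1), π.2⟩) ⟨?_, ?_⟩
  · intro π σ h
    have h1 : cols π.1 = cols σ.1 := List.ofFn_injective (Subtype.ext_iff.1 h)
    refine Subtype.ext (Equiv.symm_bijective.injective (Equiv.ext fun y => Fin.ext ?_))
    exact congrFun h1 y
  · rintro ⟨l, hl⟩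
    obtain ⟨h1, h2, h3⟩ := (good_bword hmono hb ins l).1 hl
    -- a list produced by the machine contains every column, hence is a permutation
    let f : Fin n → Fin n := fun y => ⟨l.getD y 0, (h2 y).trans_le (hb y).2⟩
    have hf : Function.Surjective f := by
      intro z
      have hz := z.2
      obtain ⟨y, -, h4, h5⟩ := exists_first_row (b := b) (z := z) (p := ⟨n - 1, by omega⟩)
        (by have := (hb ⟨n - 1, by omega⟩).1; simp at this; omega)
      have h6 := List.mem_of_mem_drop (mem_of_insOK hi (h3 y z h4 h5))
      obtain ⟨i, hi, h7⟩ := List.getElem_of_mem h6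
      refine ⟨⟨i, by omega⟩, Fin.ext ?_⟩
      simp [f, hi, h7]
    let σ : Equiv.Perm (Fin n) := Equiv.ofBijective f (Finite.injective_iff_bijective.1
      (Finite.injective_iff_surjective.2 hf))
    have h8 : List.ofFn (cols σ.symm) = l := by
      refine List.ext_getElem (by simp [h1]) ?_
      intro i h9 h10
      simp [cols, σ, f, h10]
    exact ⟨⟨σ.symm, by rw [h8]; exact hl⟩, Subtype.ext h8⟩

lemma good_cols {n : ℕ} {b : Fin n → ℕ} (hmono : Monotone b)
    (hb : ∀ y : Fin n, (y : ℕ) + 1 ≤ b y ∧ b y ≤ n) (ins : ℕ → List ℕ → List (List ℕ))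
    (π : Equiv.Perm (Fin n)) : Good ins (bword b) 0 (List.ofFn (cols π)) ↔
      IsTransversal b π ∧ ∀ (y r : Fin n), (∀ y' < y, b y' ≤ cols π r) → cols π r < b y →
        InsOK ins (cols π r) ((List.ofFn (cols π)).drop y) := by
  rw [good_bword hmono hb]
  have e : ∀ y : Fin n, (List.ofFn (cols π)).getD y 0 = cols π y := by
    intro y; simp
  simp only [e, List.length_ofFn, true_and]
  refine and_congr ?_ ?_
  · constructor
    · intro h i
      simpa [cols] using h (π i)
    · intro h y
      have := h (π.symm y)
      rw [Equiv.apply_symm_apply] at this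
      exact this
  · constructor
    · intro h y r
      exact h y _
    · intro h y z h1 h2
      have hz : z = cols π (π ⟨z, h2.trans_le (hb y).2⟩) := by simp [cols]
      rw [hz] at h1 h2 ⊢
      exact h y _ h1 h2

/-- A restriction, at the insertion of the column of row `r`, on pairs of rows between the current
row `y` and `r` amounts to a forbidden configuration of three dots inside the diagram: the column
of `r` is inserted at the first row that meets it, and a row `p` below `r` is still unfinished at
that time exactly when it meets that column too. -/
lemma restrict_iff {n : ℕ} {b : Fin n → ℕ} (hmono : Monotone b) {π : Equiv.Perm (Fin n)}
    (Q : Fin n → Fin n → Fin n → Prop) :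
    (∀ (y r : Fin n), (∀ y' < y, b y' ≤ cols π r) → cols π r < b y →
      ∀ p q : Fin n, y ≤ p → p < q → q < r → Q p q r) ↔
    ∀ p q r : Fin n, p < q → q < r → cols π r < b p → Q p q r := by
  constructor
  · intro h p q r h1 h2 h3
    obtain ⟨y, h4, h5, h6⟩ := exists_first_row h3
    exact h y r h5 h6 p q h4 h1 h2
  · intro h y r h1 h2 p q h3 h4 h5
    exact h p q r h4 h5 (h2.trans_le (hmono h3))

/-- At the insertion of the column of row `r`, this row is not yet finished. -/
lemma row_ge {n : ℕ} {b : Fin n → ℕ} {π : Equiv.Perm (Fin n)} (hT : IsTransversal b π)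
    {y r : Fin n} (h : ∀ y' < y, b y' ≤ cols π r) : y ≤ r := by
  by_contra hlt
  have h1 := h r (not_le.1 hlt)
  have h2 := hT (π.symm r)
  rw [Equiv.apply_symm_apply] at h2
  unfold cols at h1
  omega

/-- Containment of a pattern of length three, in terms of three explicit columns. -/
lemma containsIn_three {n : ℕ} (b : Fin n → ℕ) (π : Equiv.Perm (Fin n)) (τ : Equiv.Perm (Fin 3)) :
    ContainsIn b π τ ↔ ∃ i j k : Fin n, i < j ∧ j < k ∧
      (∀ s t : Fin 3, τ s < τ t → π (![i, j, k] s) < π (![i, j, k] t)) ∧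
      ∀ t : Fin 3, (k : ℕ) + 1 ≤ b (π (![i, j, k] t)) := by
  constructor
  · rintro ⟨f, h1, h2, h3⟩
    have e : f = ![f 0, f 1, f 2] := by ext s; fin_cases s <;> rfl
    refine ⟨f 0, f 1, f 2, h1 (by decide), h1 (by decide), ?_, ?_⟩
    · rw [← e]; exact fun s t => (h2 s t).1
    · rw [← e]; exact fun t => h3 2 t
  · rintro ⟨i, j, k, h1, h2, h3, h4⟩
    have hmon : StrictMono ![i, j, k] := by
      intro s t hst
      fin_cases s <;> fin_cases t <;> simp at hst ⊢
      · exact h1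
      · exact h1.trans h2
      · exact h2
    refine ⟨![i, j, k], hmon, ?_, ?_⟩
    · intro s t
      refine ⟨h3 s t, fun h => ?_⟩
      by_contra hn
      rcases (not_lt.1 hn).eq_or_lt with heq | hlt
      · rw [τ.injective heq] at h; exact lt_irrefl _ h
      · exact lt_asymm h (h3 t s hlt)
    · intro s t
      have h5 : ![i, j, k] s ≤ ![i, j, k] 2 := hmon.monotone (Fin.le_last s)
      have h6 : ((![i, j, k] s : Fin n) : ℕ) ≤ k := h5
      have := h4 t
      omega

lemma contains_213 {n : ℕ} {b : Fin n → ℕ} (hmono : Monotone b) (π : Equiv.Perm (Fin n)) :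
    ContainsIn b π p213 ↔ ∃ p q r : Fin n, p < q ∧ q < r ∧ cols π q < cols π p ∧
      cols π p < cols π r ∧ cols π r < b p := by
  rw [containsIn_three]
  constructor
  · rintro ⟨i, j, k, h1, h2, h3, h4⟩
    refine ⟨π j, π i, π k, h3 1 0 (by decide), h3 0 2 (by decide), ?_, ?_, ?_⟩
    · simpa [cols] using h1
    · simpa [cols] using h2
    · simpa [cols] using h4 1
  · rintro ⟨p, q, r, h1, h2, h3, h4, h5⟩
    refine ⟨π.symm q, π.symm p, π.symm r, h3, h4, ?_, ?_⟩
    · intro s t h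
      fin_cases s <;> fin_cases t <;> first | (exfalso; revert h; decide) | simp [h1, h2, h1.trans h2]
    · have := hmono h1.le
      have := hmono (h1.trans h2).le
      unfold cols at h5
      intro t; fin_cases t <;> simp <;> omega

lemma contains_123 {n : ℕ} {b : Fin n → ℕ} (hmono : Monotone b) (π : Equiv.Perm (Fin n)) :
    ContainsIn b π p123 ↔ ∃ p q r : Fin n, p < q ∧ q < r ∧ cols π p < cols π q ∧
      cols π q < cols π r ∧ cols π r < b p := by
  rw [containsIn_three]
  constructor
  · rintro ⟨i, j, k, h1, h2, h3, h4⟩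
    refine ⟨π i, π j, π k, h3 0 1 (by decide), h3 1 2 (by decide), ?_, ?_, ?_⟩
    · simpa [cols] using h1
    · simpa [cols] using h2
    · simpa [cols] using h4 0
  · rintro ⟨p, q, r, h1, h2, h3, h4, h5⟩
    refine ⟨π.symm p, π.symm q, π.symm r, h3, h4, ?_, ?_⟩
    · intro s t h
      fin_cases s <;> fin_cases t <;> first | (exfalso; revert h; decide) | simp [h1, h2, h1.trans h2]
    · have := hmono h1.le
      have := hmono (h1.trans h2).le
      unfold cols at h5
      intro t; fin_cases t <;> simp <;> omega

lemma rows_of_contains_321 {n : ℕ} {b : Fin n → ℕ} {π : Equiv.Perm (Fin n)}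
    (h : ContainsIn b π p321) : ∃ r p q : Fin n, r < p ∧ p < q ∧ cols π q < cols π p ∧
      cols π p < cols π r := by
  rw [containsIn_three] at h
  obtain ⟨i, j, k, h1, h2, h3, h4⟩ := h
  refine ⟨π k, π j, π i, h3 2 1 (by decide), h3 1 0 (by decide), ?_, ?_⟩
  · simpa [cols] using h1
  · simpa [cols] using h2

lemma SYcard_213 {n : ℕ} {b : Fin n → ℕ} (hmono : Monotone b)
    (hb : ∀ y : Fin n, (y : ℕ) + 1 ≤ b y ∧ b y ≤ n) :
    SYcard b p213 = cnt succA popFirst (bword b) none := by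
  rw [← length_outs_A, ← card_good hmono hb (isInsertion_insF _), SYcard]
  refine Nat.card_congr (Equiv.subtypeEquivRight fun π => ?_)
  rw [good_cols hmono hb]
  refine and_congr_right fun hT => ?_
  rw [contains_213 hmono, ← not_iff_not, not_not]
  have := restrict_iff (π := π) hmono (fun p q r => cols π p < cols π r → cols π q < cols π r →
    cols π p < cols π q)
  have h2 : (∀ (y r : Fin n), (∀ y' < y, b y' ≤ cols π r) → cols π r < b y →
      InsOK (insF ltB) (cols π r) ((List.ofFn (cols π)).drop y)) ↔ _ :=
    Iff.trans (forall_congr' fun y => forall_congr' fun r => forall_congr' fun h1 =>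
      forall_congr' fun h2 => insOK_ltB (cols_inj π) y r (row_ge hT h1)) this
  rw [h2]
  push Not
  constructor
  · rintro ⟨p, q, r, h1, h2, h3, h4, h5⟩
    exact ⟨p, q, r, h1, h2, h5, h4, h3.trans h4, h3.le⟩
  · rintro ⟨p, q, r, h1, h2, h3, h4, h5, h6⟩
    exact ⟨p, q, r, h1, h2, lt_of_le_of_ne h6 fun h => h1.ne' (cols_inj π h), h4, h3⟩

lemma SYcard_123 {n : ℕ} {b : Fin n → ℕ} (hmono : Monotone b)
    (hb : ∀ y : Fin n, (y : ℕ) + 1 ≤ b y ∧ b y ≤ n) :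
    SYcard b p123 = cnt succB popFirst (bword b) none := by
  rw [← length_outs_B, ← card_good hmono hb (isInsertion_insF _), SYcard]
  refine Nat.card_congr (Equiv.subtypeEquivRight fun π => ?_)
  rw [good_cols hmono hb]
  refine and_congr_right fun hT => ?_
  rw [contains_123 hmono, ← not_iff_not, not_not]
  have := restrict_iff (π := π) hmono (fun p q r => cols π p < cols π r → cols π q < cols π r →
    cols π q < cols π p)
  have h2 : (∀ (y r : Fin n), (∀ y' < y, b y' ≤ cols π r) → cols π r < b y →
      InsOK (insF gtB) (cols π r) ((List.ofFn (cols π)).drop y)) ↔ _ :=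
    Iff.trans (forall_congr' fun y => forall_congr' fun r => forall_congr' fun h1 =>
      forall_congr' fun h2 => insOK_gtB (cols_inj π) y r (row_ge hT h1)) this
  rw [h2]
  push Not
  constructor
  · rintro ⟨p, q, r, h1, h2, h3, h4, h5⟩
    exact ⟨p, q, r, h1, h2, h5, h3.trans h4, h4, h3.le⟩
  · rintro ⟨p, q, r, h1, h2, h3, h4, h5, h6⟩
    exact ⟨p, q, r, h1, h2, lt_of_le_of_ne h6 fun h => h1.ne (cols_inj π h), h5, h3⟩

lemma cntH_le_SYcard_321 {n : ℕ} {b : Fin n → ℕ} (hmono : Monotone b)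
    (hb : ∀ y : Fin n, (y : ℕ) + 1 ≤ b y ∧ b y ≤ n) :
    cnt succB popLast (bword b) none ≤ SYcard b p321 := by
  rw [← length_outs_H, ← card_good hmono hb (isInsertion_insR _), SYcard]
  refine Nat.card_le_card_of_injective (fun π => ⟨π.1, ?_⟩)
    (fun π σ h => Subtype.ext (Subtype.mk.inj h))
  obtain ⟨hT, h⟩ := (good_cols hmono hb _ _).1 π.2
  refine ⟨hT, fun hc => ?_⟩
  obtain ⟨r, p, q, h1, h2, h3, h4⟩ := rows_of_contains_321 hc
  have hr : cols π.1 r < b r := by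
    have := hT (π.1.symm r)
    rw [Equiv.apply_symm_apply] at this
    exact this
  obtain ⟨y, h5, h6, h7⟩ := exists_first_row hr
  exact lt_asymm h3
    ((insOK_rev (cols_inj π.1) y r h5).1 (h y r h6 h7) p q h1 h2 h4 (h3.trans h4))

/-! ### From 321 to 312 through left-to-right maxima -/

/-- The set of dots of `π` that are left-to-right maxima. -/
def lrMax {n : ℕ} (π : Equiv.Perm (Fin n)) : Set (Fin n × Fin n) :=
  {d | π d.1 = d.2 ∧ ∀ j < d.1, π j < d.2}

lemma lrMax_swap_subset {n : ℕ} {π : Equiv.Perm (Fin n)} {c i j : Fin n} (hci : c < i)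
    (hcj : c < j) (hi : π i < π c) (hj : π j < π c) :
    lrMax π ⊆ lrMax (π * Equiv.swap i j) := by
  rintro ⟨k, v⟩ ⟨hv, h⟩
  simp only at hv h
  subst hv
  have hki : k ≠ i := by rintro rfl; exact lt_asymm hi (h c hci)
  have hkj : k ≠ j := by rintro rfl; exact lt_asymm hj (h c hcj)
  refine ⟨by simp [Equiv.swap_apply_of_ne_of_ne hki hkj], ?_⟩
  intro l hl
  simp only [Equiv.Perm.mul_apply] at hl ⊢
  by_cases hli : l = i
  · subst hli; rw [Equiv.swap_apply_left]; exact hj.trans (h c (hci.trans hl))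
  by_cases hlj : l = j
  · subst hlj; rw [Equiv.swap_apply_right]; exact hi.trans (h c (hcj.trans hl))
  rw [Equiv.swap_apply_of_ne_of_ne hli hlj]
  exact h l hl

/-- Two dots below and to the right of a common dot may be exchanged without affecting the
left-to-right maxima. -/
lemma lrMax_swap {n : ℕ} {π : Equiv.Perm (Fin n)} {c i j : Fin n} (hci : c < i)
    (hcj : c < j) (hi : π i < π c) (hj : π j < π c) :
    lrMax (π * Equiv.swap i j) = lrMax π := by
  refine Set.Subset.antisymm ?_ (lrMax_swap_subset hci hcj hi hj)
  have h : (π * Equiv.swap i j) * Equiv.swap i j = π := by rw [mul_assoc, Equiv.swap_mul_self, mul_one]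
  conv_rhs => rw [← h]
  refine lrMax_swap_subset (c := c) hci hcj ?_ ?_ <;>
    simp [Equiv.swap_apply_of_ne_of_ne hci.ne hcj.ne, hi, hj]

/-- The lexicographically largest transversal with given left-to-right maxima avoids 312:
exchanging the two smaller dots of an occurrence would produce a larger one. -/
lemma exists_312_avoider {n : ℕ} {b : Fin n → ℕ} {π : Equiv.Perm (Fin n)}
    (hT : IsTransversal b π) :
    ∃ σ : Equiv.Perm (Fin n), (IsTransversal b σ ∧ ¬ ContainsIn b σ p312) ∧ lrMax σ = lrMax π := by
  obtain ⟨σ, ⟨h1, h2⟩, hmax⟩ := Set.exists_max_image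
    {σ : Equiv.Perm (Fin n) | IsTransversal b σ ∧ lrMax σ = lrMax π}
    (fun σ => toLex (σ : Fin n → Fin n)) (Set.toFinite _) ⟨π, hT, rfl⟩
  refine ⟨σ, ⟨h1, fun hc => ?_⟩, h2⟩
  rw [containsIn_three] at hc
  obtain ⟨c, i, j, hci, hij, h3, h4⟩ := hc
  have hi : σ i < σ c := h3 1 0 (by decide)
  have hj : σ j < σ c := h3 2 0 (by decide)
  have hlt : σ i < σ j := h3 1 2 (by decide)
  have hjb : (j : ℕ) + 1 ≤ b (σ i) := h4 1
  have hT' : IsTransversal b (σ * Equiv.swap i j) := by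
    intro k
    rw [Equiv.Perm.mul_apply]
    by_cases hki : k = i
    · subst hki; rw [Equiv.swap_apply_left]
      have := h1 j
      have : (k : ℕ) < j := hij
      omega
    by_cases hkj : k = j
    · subst hkj; rw [Equiv.swap_apply_right]; exact hjb
    rw [Equiv.swap_apply_of_ne_of_ne hki hkj]
    exact h1 k
  have h5 := hmax (σ * Equiv.swap i j) ⟨hT', (lrMax_swap hci (hci.trans hij) hi hj).trans h2⟩
  refine not_lt.2 h5 ⟨i, fun k hk => ?_, ?_⟩
  · simp [Equiv.swap_apply_of_ne_of_ne hk.ne (hk.trans hij).ne]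
  · simpa using hlt

/-- Avoidance of 321 in a diagram is plain avoidance: the last dot of an occurrence is
the rightmost and the lowest one, so the occurrence lies inside the diagram with that dot. -/
lemma contains_321_of_cols {n : ℕ} {b : Fin n → ℕ} (hmono : Monotone b) {π : Equiv.Perm (Fin n)}
    (hT : IsTransversal b π) {i j k : Fin n} (hij : i < j) (hjk : j < k) (h1 : π j < π i)
    (h2 : π k < π j) : ContainsIn b π p321 := by
  rw [containsIn_three]
  refine ⟨i, j, k, hij, hjk, ?_, ?_⟩
  · intro s t h
    fin_cases s <;> fin_cases t <;>
      first | (exfalso; revert h; decide) | simp [h1, h2, h2.trans h1]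
  · have := hT k
    have := hmono h2.le
    have := hmono (h2.trans h1).le
    intro t; fin_cases t <;> simp <;> omega

lemma not_lt_of_lrMax_eq {n : ℕ} {b : Fin n → ℕ} (hmono : Monotone b)
    {σ τ : Equiv.Perm (Fin n)} (hτ : IsTransversal b τ) (hτ' : ¬ ContainsIn b τ p321)
    (h : lrMax σ = lrMax τ) {i : Fin n} (ih : ∀ j < i, σ j = τ j) : ¬ σ i < τ i := by
  intro hlt
  have hi : ¬ ∀ j < i, τ j < τ i := by
    intro hm
    have h1 : (i, τ i) ∈ lrMax σ := h ▸ ⟨rfl, hm⟩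
    exact hlt.ne h1.1
  push Not at hi
  obtain ⟨c, hc, hc'⟩ := hi
  have hc'' : τ i < τ c := lt_of_le_of_ne hc' fun h => hc.ne' (τ.injective h)
  obtain ⟨k, hk⟩ := τ.surjective (σ i)
  have hik : i < k := by
    rcases lt_trichotomy i k with h1 | rfl | h1
    · exact h1
    · exact absurd hk hlt.ne'
    · exact absurd (σ.injective ((ih k h1).trans hk)) h1.ne
  exact hτ' (contains_321_of_cols hmono hτ hc hik hc'' (hk ▸ hlt))

/-- A transversal avoiding 321 is determined by its left-to-right maxima. -/
lemma eq_of_lrMax_eq {n : ℕ} {b : Fin n → ℕ} (hmono : Monotone b) {σ τ : Equiv.Perm (Fin n)}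
    (hσ : IsTransversal b σ) (hσ' : ¬ ContainsIn b σ p321)
    (hτ : IsTransversal b τ) (hτ' : ¬ ContainsIn b τ p321) (h : lrMax σ = lrMax τ) : σ = τ := by
  refine Equiv.ext fun i => ?_
  induction i using WellFoundedLT.induction with
  | _ i ih =>
    exact le_antisymm
      (not_lt.1 (not_lt_of_lrMax_eq hmono hσ hσ' h.symm fun j hj => (ih j hj).symm))
      (not_lt.1 (not_lt_of_lrMax_eq hmono hτ hτ' h ih))

lemma SYcard_321_le_312 {n : ℕ} {b : Fin n → ℕ} (hmono : Monotone b) :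
    SYcard b p321 ≤ SYcard b p312 := by
  choose f hf hk using fun π : {π : Equiv.Perm (Fin n) // IsTransversal b π ∧
    ¬ ContainsIn b π p321} => exists_312_avoider π.2.1
  refine Nat.card_le_card_of_injective (fun π => ⟨f π, hf π⟩) ?_
  intro σ τ h
  have h1 : f σ = f τ := Subtype.mk.inj h
  exact Subtype.ext (eq_of_lrMax_eq hmono σ.2.1 σ.2.2 τ.2.1 τ.2.2
    ((hk σ).symm.trans ((congrArg lrMax h1).trans (hk τ))))

theorem stmt0 (n : ℕ) (b : Fin n → ℕ) (hmono : Monotone b)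
    (hb : ∀ y : Fin n, (y : ℕ) + 1 ≤ b y ∧ b y ≤ n) :
    SYcard b p213 ≤ SYcard b p123 ∧ SYcard b p123 ≤ SYcard b p312 := by
  rw [SYcard_213 hmono hb, SYcard_123 hmono hb]
  exact ⟨cntA_le_cntB _ _, (cntB_le_cntH _).trans
    ((cntH_le_SYcard_321 hmono hb).trans (SYcard_321_le_312 hmono))⟩
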